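/- arXiv:1810.12232 — 2 statements merged into one kernel-verified Lean document; each statement's English description precedes it below -/
import Mathlib

section
/- There exists a constant C > 0, depending only on Ω, ω₀, ω and η⁰, such that for every T > 0, every bounded measurable potential a, and every classical nonnegative solution q of the adjoint heat equation with Neumann boundary condition, one has ∫_Ω q(T/4, x) dx ≤ exp(C(1 + 1/T + T‖a‖_∞ + ‖a‖_∞^{1/2})) ∫₀^T ∫_ω q(t,x) dx dt. -/
open MeasureTheory Real Set RealInnerProductSpace

noncomputable def spaceLaplacian {N : ℕ} (f : EuclideanSpace ℝ (Fin N) → ℝ)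
    (x : EuclideanSpace ℝ (Fin N)) : ℝ :=
  ∑ i : Fin N, fderiv ℝ (fun y => fderiv ℝ f y (EuclideanSpace.single i 1)) x
    (EuclideanSpace.single i 1)

lemma aux_int_fderiv_zero {N : ℕ} {K Ω : Set (EuclideanSpace ℝ (Fin N))}
    (hK : IsCompact K) (hΩ : IsOpen Ω) (hKΩ : K ⊆ Ω)
    (f : EuclideanSpace ℝ (Fin N) → ℝ)
    (f' : EuclideanSpace ℝ (Fin N) → (EuclideanSpace ℝ (Fin N) →L[ℝ] ℝ))
    (hf : ∀ x ∈ Ω, HasFDerivAt f (f' x) x) (hc : ContinuousOn f' Ω)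
    (h0 : ∀ x, x ∉ K → f x = 0) (v : EuclideanSpace ℝ (Fin N)) :
    IntegrableOn (fun x => f' x v) Ω ∧ ∫ x in Ω, f' x v = 0 := by
  have hloc : ∀ x, x ∉ K → f =ᶠ[nhds x] fun _ => 0 := by
    intro x hx
    filter_upwards [hK.isClosed.isOpen_compl.mem_nhds hx] with y hy using h0 y hy
  have hd : Differentiable ℝ f := by
    intro x
    by_cases hx : x ∈ Ω
    · exact (hf x hx).differentiableAt
    · exact (hloc x (fun h => hx (hKΩ h))).differentiableAt_iff.2 (differentiableAt_const _)
  have hfd0 : ∀ x, x ∉ K → fderiv ℝ f x = 0 := by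
    intro x hx
    rw [(hloc x hx).fderiv_eq]; simp
  have hcf : Continuous (fderiv ℝ f) := by
    rw [continuous_iff_continuousAt]
    intro x
    by_cases hx : x ∈ Ω
    · have : f' =ᶠ[nhds x] fderiv ℝ f := by
        filter_upwards [hΩ.mem_nhds hx] with y hy using (hf y hy).fderiv.symm
      exact (hc.continuousAt (hΩ.mem_nhds hx)).congr this
    · have hx' : x ∉ K := fun h => hx (hKΩ h)
      have : (fun _ => 0) =ᶠ[nhds x] fderiv ℝ f := by
        filter_upwards [hK.isClosed.isOpen_compl.mem_nhds hx'] with y hy using (hfd0 y hy).symm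
      exact continuousAt_const.congr this
  have hs : HasCompactSupport f := HasCompactSupport.intro hK h0
  have hcv : Continuous (fun x => fderiv ℝ f x v) := hcf.clm_apply continuous_const
  have hsv : HasCompactSupport (fun x => fderiv ℝ f x v) :=
    HasCompactSupport.intro hK (fun x hx => by rw [hfd0 x hx]; simp)
  have hi : Integrable (fun x => fderiv ℝ f x v) := hcv.integrable_of_hasCompactSupport hsv
  have hi0 : Integrable f := hd.continuous.integrable_of_hasCompactSupport hs
  have key := integral_mul_fderiv_eq_neg_fderiv_mul_of_integrable (𝕜 := ℝ)
    (μ := (volume : Measure (EuclideanSpace ℝ (Fin N)))) (f := fun _ => (1:ℝ)) (g := f) (v := v)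
    (by simp) (by simpa using hi) (by simpa using hi0) (fun x _ => differentiableAt_const _)
    (fun x _ => hd x)
  simp at key
  have he : EqOn (fun x => fderiv ℝ f x v) (fun x => f' x v) Ω := by
    intro x hx
    simp only [(hf x hx).fderiv]
  refine ⟨hi.integrableOn.congr_fun he hΩ.measurableSet, ?_⟩
  rw [← setIntegral_congr_fun hΩ.measurableSet he, ← key]
  apply setIntegral_eq_integral_of_forall_compl_eq_zero
  intro x hx
  rw [hfd0 x (fun h => hx (hKΩ h))]; simp

lemma aux_intOn {N : ℕ} {Ω : Set (EuclideanSpace ℝ (Fin N))}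
    (hΩb : Bornology.IsBounded Ω) {g : EuclideanSpace ℝ (Fin N) → ℝ}
    (hg : ContinuousOn g (closure Ω)) : IntegrableOn g Ω :=
  (hg.integrableOn_compact hΩb.isCompact_closure).mono_set subset_closure

lemma aux_div_strict {N : ℕ} {Ω : Set (EuclideanSpace ℝ (Fin N))}
    (hΩo : IsOpen Ω) (hΩb : Bornology.IsBounded Ω)
    (η : EuclideanSpace ℝ (Fin N) → ℝ) (hη : ContDiff ℝ 2 η)
    (hηpos : ∀ x ∈ Ω, 0 < η x) (hηbd : ∀ x ∈ frontier Ω, η x = 0)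
    (W : Fin N → EuclideanSpace ℝ (Fin N) → ℝ)
    (W' : Fin N → EuclideanSpace ℝ (Fin N) → (EuclideanSpace ℝ (Fin N) →L[ℝ] ℝ))
    (hW : ∀ i, ∀ x ∈ closure Ω, HasFDerivAt (W i) (W' i x) x)
    (hW' : ∀ i, ContinuousOn (W' i) (closure Ω))
    (hbd : ∀ x ∈ frontier Ω, 0 < ∑ i, W i x * fderiv ℝ η x (EuclideanSpace.single i 1)) :
    ∫ x in Ω, ∑ i, W' i x (EuclideanSpace.single i 1) ≤ 0 := by
  have hcpt := hΩb.isCompact_closure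
  have hηc : Continuous η := hη.continuous
  have hηd : Differentiable ℝ η := hη.differentiable (by norm_num)
  have hηf : Continuous (fderiv ℝ η) := hη.continuous_fderiv (by norm_num)
  have hWc : ∀ i, ContinuousOn (W i) (closure Ω) := fun i x hx =>
    (hW i x hx).continuousAt.continuousWithinAt
  have hcl : ∀ x ∈ closure Ω, x ∈ Ω ∨ x ∈ frontier Ω := by
    intro x hx
    by_cases h : x ∈ Ω
    · exact Or.inl h
    · right; rw [hΩo.frontier_eq]; exact ⟨hx, h⟩
  have hGc : ContinuousOn (fun x => ∑ i, W i x * fderiv ℝ η x (EuclideanSpace.single i 1))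
      (closure Ω) := by
    apply continuousOn_finsetSum
    intro i _
    exact (hWc i).mul (hηf.clm_apply continuous_const).continuousOn
  -- small level
  obtain ⟨m, hm, hmG⟩ : ∃ m > 0, ∀ x ∈ Ω, η x < m →
      0 < ∑ i, W i x * fderiv ℝ η x (EuclideanSpace.single i 1) := by
    have hS : IsCompact (closure Ω ∩
        (fun x => ∑ i, W i x * fderiv ℝ η x (EuclideanSpace.single i 1)) ⁻¹' Iic 0) :=
      hcpt.of_isClosed_subset (hGc.preimage_isClosed_of_isClosed isClosed_closure isClosed_Iic)
        inter_subset_left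
    have hSpos : ∀ x ∈ (closure Ω ∩
        (fun x => ∑ i, W i x * fderiv ℝ η x (EuclideanSpace.single i 1)) ⁻¹' Iic 0), 0 < η x := by
      rintro x ⟨hx, hx2⟩
      rcases hcl x hx with h | h
      · exact hηpos x h
      · exact absurd (hbd x h) (not_lt.2 hx2)
    obtain ⟨m, hm, hmx⟩ := hS.exists_forall_le' hηc.continuousOn hSpos
    refine ⟨m, hm, fun x hx hxm => ?_⟩
    by_contra hcon
    exact absurd (hmx x ⟨subset_closure hx, not_lt.1 hcon⟩) (not_le.2 hxm)
  have hst : ContDiff ℝ 1 Real.smoothTransition := Real.smoothTransition.contDiff (n := 1)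
  have hstd : Differentiable ℝ Real.smoothTransition := hst.differentiable (by norm_num)
  have hstc : Continuous (deriv Real.smoothTransition) := hst.continuous_deriv (by norm_num)
  -- cutoff inequality
  have hcut : ∀ n : ℕ, 2 < n * m → ∫ x in Ω, Real.smoothTransition (n * η x - 1) *
      ∑ i, W' i x (EuclideanSpace.single i 1) ≤ 0 := by
    intro n hn
    have hn0 : (0:ℝ) < n := by
      by_contra h
      nlinarith [not_lt.1 h]
    set K := closure Ω ∩ η ⁻¹' Ici (1 / (n:ℝ)) with hKdef
    have hK : IsCompact K := hcpt.inter_right (isClosed_Ici.preimage hηc)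
    have hKΩ : K ⊆ Ω := by
      rintro x ⟨hx, hx2⟩
      rcases hcl x hx with h | h
      · exact h
      · have : (1:ℝ)/n ≤ 0 := by simpa [hηbd x h] using hx2
        have : (0:ℝ) < 1/n := by positivity
        linarith
    have hh : ∀ x, HasFDerivAt (fun x => Real.smoothTransition (n * η x - 1))
        ((deriv Real.smoothTransition (n * η x - 1) * n) • fderiv ℝ η x) x := by
      intro x
      have h1 : HasFDerivAt (fun x => n * η x - 1) ((n:ℝ) • fderiv ℝ η x) x :=
        ((hηd x).hasFDerivAt.const_mul _).sub_const _
      have h2 := (hstd (n * η x - 1)).hasDerivAt.comp_hasFDerivAt x h1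
      rw [smul_smul] at h2
      exact h2
    have hci := fun i => aux_int_fderiv_zero hK hΩo hKΩ
      (Ω.indicator (fun x => Real.smoothTransition (n * η x - 1) * W i x))
      (fun x => Real.smoothTransition (n * η x - 1) • W' i x +
        W i x • ((deriv Real.smoothTransition (n * η x - 1) * n) • fderiv ℝ η x))
      (by
        intro x hx
        refine ((hh x).mul (hW i x (subset_closure hx))).congr_of_eventuallyEq ?_
        filter_upwards [hΩo.mem_nhds hx] with y hy
        simp [hy])
      (by
        refine ContinuousOn.add ?_ ?_
        · have h5 : Continuous fun x => Real.smoothTransition (n * η x - 1) :=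
            Real.smoothTransition.continuous.comp (by fun_prop)
          exact h5.continuousOn.smul ((hW' i).mono subset_closure)
        · refine ContinuousOn.smul ((hWc i).mono subset_closure) ?_
          refine Continuous.continuousOn ?_
          have h5 : Continuous fun x => deriv Real.smoothTransition (n * η x - 1) * n :=
            (hstc.comp (by fun_prop)).mul continuous_const
          exact h5.smul hηf)
      (by
        intro x hx
        by_cases hxΩ : x ∈ Ω
        · have : η x < 1 / n := by
            by_contra h
            exact hx ⟨subset_closure hxΩ, not_lt.1 h⟩
          have h2 : n * η x - 1 ≤ 0 := by
            rw [lt_div_iff₀ hn0] at this; linarith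
          simp [hxΩ, Real.smoothTransition.zero_of_nonpos h2]
        · simp [hxΩ])
      (EuclideanSpace.single i 1)
    have hsum : ∫ x in Ω, ∑ i, (Real.smoothTransition (n * η x - 1) • W' i x +
        W i x • ((deriv Real.smoothTransition (n * η x - 1) * n) • fderiv ℝ η x))
        (EuclideanSpace.single i 1) = 0 := by
      rw [integral_finsetSum _ (fun i _ => (hci i).1)]
      exact Finset.sum_eq_zero (fun i _ => (hci i).2)
    rw [← hsum]
    apply setIntegral_mono_on
    · apply aux_intOn hΩb
      refine ContinuousOn.mul ?_ ?_
      · exact (Real.smoothTransition.continuous.comp (by fun_prop)).continuousOn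
      · exact continuousOn_finsetSum _ (fun i _ => (hW' i).clm_apply continuousOn_const)
    · exact integrable_finsetSum _ (fun i _ => (hci i).1)
    · exact hΩo.measurableSet
    intro x hx
    have e : ∑ i, (Real.smoothTransition (n * η x - 1) • W' i x +
        W i x • ((deriv Real.smoothTransition (n * η x - 1) * n) • fderiv ℝ η x))
        (EuclideanSpace.single i 1) = Real.smoothTransition (n * η x - 1) *
      ∑ i, W' i x (EuclideanSpace.single i 1) +
      (deriv Real.smoothTransition (n * η x - 1) * n) *
        ∑ i, W i x * fderiv ℝ η x (EuclideanSpace.single i 1) := by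
      rw [Finset.mul_sum, Finset.mul_sum, ← Finset.sum_add_distrib]
      refine Finset.sum_congr rfl (fun i _ => ?_)
      simp; ring
    rw [e]
    have hdn : 0 ≤ deriv Real.smoothTransition (n * η x - 1) :=
      Real.smoothTransition.monotone.deriv_nonneg
    rcases lt_or_ge (η x) m with h | h
    · have := hmG x hx h
      have : 0 ≤ (deriv Real.smoothTransition (n * η x - 1) * n) *
        ∑ i, W i x * fderiv ℝ η x (EuclideanSpace.single i 1) := by positivity
      linarith
    · have h1 : 1 < n * η x - 1 := by nlinarith
      have : deriv Real.smoothTransition (n * η x - 1) = 0 := by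
        have : Real.smoothTransition =ᶠ[nhds (n * η x - 1)] fun _ => 1 := by
          filter_upwards [Ioi_mem_nhds h1] with y hy
          exact Real.smoothTransition.one_of_one_le (le_of_lt hy)
        rw [this.deriv_eq]; simp
      rw [this]; simp
  have hlim : Filter.Tendsto (fun n : ℕ => ∫ x in Ω, Real.smoothTransition (n * η x - 1) *
      ∑ i, W' i x (EuclideanSpace.single i 1)) Filter.atTop
      (nhds (∫ x in Ω, ∑ i, W' i x (EuclideanSpace.single i 1))) := by
    have hdc : ContinuousOn (fun x => ∑ i, W' i x (EuclideanSpace.single i 1)) (closure Ω) :=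
      continuousOn_finsetSum _ (fun i _ => (hW' i).clm_apply continuousOn_const)
    apply tendsto_integral_of_dominated_convergence
      (fun x => ‖∑ i, W' i x (EuclideanSpace.single i 1)‖)
    · intro n
      refine (aux_intOn hΩb (ContinuousOn.mul ?_ hdc)).aestronglyMeasurable
      exact (Real.smoothTransition.continuous.comp (by fun_prop)).continuousOn
    · exact (aux_intOn hΩb hdc).norm
    · intro n
      refine Filter.Eventually.of_forall (fun x => ?_)
      rw [norm_mul, Real.norm_of_nonneg (Real.smoothTransition.nonneg _)]
      exact mul_le_of_le_one_left (norm_nonneg _) (Real.smoothTransition.le_one _)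
    · filter_upwards [ae_restrict_mem hΩo.measurableSet] with x hx
      apply tendsto_const_nhds.congr'
      filter_upwards [Filter.eventually_ge_atTop (Nat.ceil (2 / η x))] with n hn
      have h0 := hηpos x hx
      have : 2 / η x ≤ n := (Nat.le_ceil _).trans (by exact_mod_cast hn)
      rw [div_le_iff₀ h0] at this
      rw [Real.smoothTransition.one_of_one_le (by linarith), one_mul]
  refine le_of_tendsto hlim ?_
  filter_upwards [Filter.eventually_gt_atTop (Nat.ceil (2 / m))] with n hn
  apply hcut
  have : 2 / m < n := (Nat.le_ceil _).trans_lt (by exact_mod_cast hn)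
  rwa [div_lt_iff₀ hm] at this

lemma aux_lap {N : ℕ} {f : EuclideanSpace ℝ (Fin N) → ℝ} {x : EuclideanSpace ℝ (Fin N)}
    (h : DifferentiableAt ℝ (fun y => fderiv ℝ f y) x) :
    spaceLaplacian f x = ∑ i, fderiv ℝ (fun y => fderiv ℝ f y) x (EuclideanSpace.single i 1)
      (EuclideanSpace.single i 1) := by
  unfold spaceLaplacian
  refine Finset.sum_congr rfl (fun i _ => ?_)
  have := h.hasFDerivAt.clm_apply (hasFDerivAt_const (EuclideanSpace.single i (1:ℝ)) x)
  rw [this.fderiv]; simp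

lemma aux_inner {N : ℕ} (f g : EuclideanSpace ℝ (Fin N) → ℝ) (x : EuclideanSpace ℝ (Fin N)) :
    ∑ i, fderiv ℝ f x (EuclideanSpace.single i 1) * fderiv ℝ g x (EuclideanSpace.single i 1) =
      ⟪gradient f x, gradient g x⟫ := by
  rw [← (EuclideanSpace.basisFun (Fin N) ℝ).sum_inner_mul_inner]
  refine Finset.sum_congr rfl (fun i _ => ?_)
  rw [real_inner_comm (gradient g x)]
  simp only [gradient, InnerProductSpace.toDual_symm_apply, EuclideanSpace.basisFun_apply]

lemma aux_comp {N : ℕ} {f : EuclideanSpace ℝ (Fin N) → ℝ} {x : EuclideanSpace ℝ (Fin N)}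
    (h : DifferentiableAt ℝ (fun y => fderiv ℝ f y) x) (v : EuclideanSpace ℝ (Fin N)) :
    HasFDerivAt (fun y => fderiv ℝ f y v) ((fderiv ℝ (fun y => fderiv ℝ f y) x).flip v) x := by
  have := h.hasFDerivAt.clm_apply (hasFDerivAt_const v x)
  simpa using this

lemma aux_div {N : ℕ} {Ω : Set (EuclideanSpace ℝ (Fin N))}
    (hΩo : IsOpen Ω) (hΩb : Bornology.IsBounded Ω)
    (η : EuclideanSpace ℝ (Fin N) → ℝ) (hη : ContDiff ℝ 2 η)
    (hηpos : ∀ x ∈ Ω, 0 < η x) (hηbd : ∀ x ∈ frontier Ω, η x = 0)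
    (hηgrad : ∀ x ∈ frontier Ω, 0 < ‖gradient η x‖)
    (W : Fin N → EuclideanSpace ℝ (Fin N) → ℝ)
    (W' : Fin N → EuclideanSpace ℝ (Fin N) → (EuclideanSpace ℝ (Fin N) →L[ℝ] ℝ))
    (hW : ∀ i, ∀ x ∈ closure Ω, HasFDerivAt (W i) (W' i x) x)
    (hW' : ∀ i, ContinuousOn (W' i) (closure Ω))
    (hbd : ∀ x ∈ frontier Ω, 0 ≤ ∑ i, W i x * fderiv ℝ η x (EuclideanSpace.single i 1)) :
    ∫ x in Ω, ∑ i, W' i x (EuclideanSpace.single i 1) ≤ 0 := by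
  have hηf : ContDiff ℝ 1 (fderiv ℝ η) := hη.fderiv_right (by norm_num)
  have hηff : Continuous (fderiv ℝ (fderiv ℝ η)) := hηf.continuous_fderiv (by norm_num)
  have hηfd : Differentiable ℝ (fderiv ℝ η) := hηf.differentiable (by norm_num)
  set L := ∫ x in Ω, ∑ i : Fin N, (fderiv ℝ (fderiv ℝ η) x).flip (EuclideanSpace.single i 1)
    (EuclideanSpace.single i 1) with hL
  have hflip : ∀ i : Fin N, Continuous (fun x => (fderiv ℝ (fderiv ℝ η) x).flip
      (EuclideanSpace.single i (1:ℝ))) := fun i =>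
    ((ContinuousLinearMap.flipₗᵢ ℝ _ _ _).continuous.comp hηff).clm_apply continuous_const
  have key : ∀ δ > 0, (∫ x in Ω, ∑ i, W' i x (EuclideanSpace.single i 1)) + δ * L ≤ 0 := by
    intro δ hδ
    have := aux_div_strict hΩo hΩb η hη hηpos hηbd
      (fun i x => W i x + δ * fderiv ℝ η x (EuclideanSpace.single i 1))
      (fun i x => W' i x + δ • (fderiv ℝ (fderiv ℝ η) x).flip (EuclideanSpace.single i 1))
      (fun i x hx => (hW i x hx).add ((aux_comp (hηfd x) _).const_mul δ))
      (fun i => (hW' i).add ((hflip i).const_smul δ).continuousOn)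
      (by
        intro x hx
        have h1 := hbd x hx
        have h2 := aux_inner η η x
        rw [real_inner_self_eq_norm_sq] at h2
        have h3 := hηgrad x hx
        have : ∑ i, (W i x + δ * fderiv ℝ η x (EuclideanSpace.single i 1)) *
          fderiv ℝ η x (EuclideanSpace.single i 1) = 
          ∑ i, W i x * fderiv ℝ η x (EuclideanSpace.single i 1) + δ * ‖gradient η x‖ ^ 2 := by
          rw [← h2, Finset.mul_sum, ← Finset.sum_add_distrib]
          exact Finset.sum_congr rfl (fun i _ => by ring)
        rw [this]
        positivity)
    rw [hL, ← integral_const_mul, ← integral_add]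
    · convert this using 3 with x
      simp [Finset.sum_add_distrib, Finset.mul_sum]
    · exact aux_intOn hΩb
        (continuousOn_finsetSum _ (fun i _ => (hW' i).clm_apply continuousOn_const))
    · refine Integrable.const_mul (aux_intOn hΩb ?_) δ
      exact continuousOn_finsetSum _
        (fun i _ => (hflip i).continuousOn.clm_apply continuousOn_const)
  by_contra hcon
  push Not at hcon
  set I := ∫ x in Ω, ∑ i, W' i x (EuclideanSpace.single i 1)
  have h := key (I / (2 * (|L| + 1))) (by positivity)
  have h2 : -(I / 2) ≤ I / (2 * (|L| + 1)) * L := by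
    have h3 : -(|L|+1) ≤ L := by linarith [neg_abs_le L]
    calc -(I/2) = I / (2 * (|L| + 1)) * (-(|L|+1)) := by field_simp
      _ ≤ _ := by gcongr
  linarith

lemma aux_green {N : ℕ} {Ω : Set (EuclideanSpace ℝ (Fin N))}
    (hΩo : IsOpen Ω) (hΩb : Bornology.IsBounded Ω)
    (η : EuclideanSpace ℝ (Fin N) → ℝ) (hη : ContDiff ℝ 2 η)
    (hηpos : ∀ x ∈ Ω, 0 < η x) (hηbd : ∀ x ∈ frontier Ω, η x = 0)
    (hηgrad : ∀ x ∈ frontier Ω, 0 < ‖gradient η x‖)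
    (f : EuclideanSpace ℝ (Fin N) → ℝ)
    (hf0 : ∀ x ∈ closure Ω, 0 ≤ f x)
    (hf1 : ∀ x ∈ closure Ω, DifferentiableAt ℝ f x)
    (hf2 : ∀ x ∈ closure Ω, DifferentiableAt ℝ (fun y => fderiv ℝ f y) x)
    (hf3 : ContinuousOn (fun x => fderiv ℝ (fun y => fderiv ℝ f y) x) (closure Ω))
    (hN : ∀ x ∈ frontier Ω, ⟪gradient f x, gradient η x⟫ = 0) (s : ℝ) (hs : 0 ≤ s) :
    ∫ x in Ω, (f x * (exp (s * η x) * (s ^ 2 * ‖gradient η x‖ ^ 2 + s * spaceLaplacian η x))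
      - exp (s * η x) * spaceLaplacian f x) ≤ 0 := by
  have hηd : Differentiable ℝ η := hη.differentiable (by norm_num)
  have hη0 : Continuous η := hη.continuous
  have hη1 : Continuous (fderiv ℝ η) := hη.continuous_fderiv (by norm_num)
  have hηf : ContDiff ℝ 1 (fderiv ℝ η) := hη.fderiv_right (by norm_num)
  have hηff : Continuous (fderiv ℝ (fderiv ℝ η)) := hηf.continuous_fderiv (by norm_num)
  have hηfd : Differentiable ℝ (fderiv ℝ η) := hηf.differentiable (by norm_num)
  have hflip : ∀ i : Fin N, Continuous (fun x => (fderiv ℝ (fun y => fderiv ℝ η y) x).flip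
      (EuclideanSpace.single i (1:ℝ))) := fun i =>
    ((ContinuousLinearMap.flipₗᵢ ℝ _ _ _).continuous.comp hηff).clm_apply continuous_const
  have hflipf : ∀ i : Fin N, ContinuousOn (fun x => (fderiv ℝ (fun y => fderiv ℝ f y) x).flip
      (EuclideanSpace.single i (1:ℝ))) (closure Ω) := fun i =>
    ((ContinuousLinearMap.flipₗᵢ ℝ _ _ _).continuous.comp_continuousOn hf3).clm_apply
      continuousOn_const
  have hfc : ContinuousOn f (closure Ω) := fun x hx => (hf1 x hx).continuousAt.continuousWithinAt
  have hfc1 : ContinuousOn (fderiv ℝ f) (closure Ω) :=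
    fun x hx => (hf2 x hx).continuousAt.continuousWithinAt
  have hexp : ∀ x, HasFDerivAt (fun x => exp (s * η x)) (exp (s * η x) • (s • fderiv ℝ η x)) x :=
    fun x => ((hηd x).hasFDerivAt.const_mul s).exp
  have hexpc : Continuous fun x => exp (s * η x) := by fun_prop
  have hpc : ∀ i : Fin N, Continuous fun x => fderiv ℝ η x (EuclideanSpace.single i 1) :=
    fun i => hη1.clm_apply continuous_const
  have hpf : ∀ i : Fin N, ContinuousOn (fun x => fderiv ℝ f x (EuclideanSpace.single i 1))
    (closure Ω) := fun i => hfc1.clm_apply continuousOn_const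
  have key := aux_div hΩo hΩb η hη hηpos hηbd hηgrad
    (fun i x => s * (f x * (exp (s * η x) * fderiv ℝ η x (EuclideanSpace.single i 1)))
      - exp (s * η x) * fderiv ℝ f x (EuclideanSpace.single i 1))
    (fun i x => s • (f x • (exp (s * η x) • (fderiv ℝ (fun y => fderiv ℝ η y) x).flip
          (EuclideanSpace.single i 1)
        + fderiv ℝ η x (EuclideanSpace.single i 1) • (exp (s * η x) • (s • fderiv ℝ η x)))
        + (exp (s * η x) * fderiv ℝ η x (EuclideanSpace.single i 1)) • fderiv ℝ f x)
      - (exp (s * η x) • (fderiv ℝ (fun y => fderiv ℝ f y) x).flip (EuclideanSpace.single i 1)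
        + fderiv ℝ f x (EuclideanSpace.single i 1) • (exp (s * η x) • (s • fderiv ℝ η x))))
    (by
      intro i x hx
      exact (((hf1 x hx).hasFDerivAt.mul ((hexp x).mul (aux_comp (hηfd x) _))).const_mul s).sub
        ((hexp x).mul (aux_comp (hf2 x hx) _)))
    (by
      intro i
      have c1 : Continuous fun x => exp (s * η x) • (s • fderiv ℝ η x) :=
        hexpc.smul (hη1.const_smul s)
      have c2 := (hexpc.smul (hflip i)).add ((hpc i).smul c1)
      have c3 := (hfc.smul c2.continuousOn).add ((hexpc.mul (hpc i)).continuousOn.smul hfc1)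
      exact (c3.const_smul s).sub ((hexpc.continuousOn.smul (hflipf i)).add
        ((hpf i).smul c1.continuousOn)))
    (by
      intro x hx
      have h1 := aux_inner η η x
      rw [real_inner_self_eq_norm_sq] at h1
      have h2 := aux_inner f η x
      rw [hN x hx] at h2
      have h3 := hf0 x (frontier_subset_closure hx)
      have e : ∑ i, (s * (f x * (exp (s * η x) * fderiv ℝ η x (EuclideanSpace.single i 1)))
        - exp (s * η x) * fderiv ℝ f x (EuclideanSpace.single i 1)) *
          fderiv ℝ η x (EuclideanSpace.single i 1) =
          s * f x * exp (s * η x) * ‖gradient η x‖ ^ 2 - exp (s * η x) * 0 := by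
        rw [← h1, ← h2, Finset.mul_sum, Finset.mul_sum, ← Finset.sum_sub_distrib]
        exact Finset.sum_congr rfl (fun i _ => by ring)
      rw [e, mul_zero, sub_zero]
      positivity)
  refine le_of_eq_of_le (setIntegral_congr_fun hΩo.measurableSet ?_) key
  intro x hx
  have h1 := aux_inner η η x
  rw [real_inner_self_eq_norm_sq] at h1
  simp only
  rw [aux_lap (hf2 x (subset_closure hx)), aux_lap (hηfd x), ← h1, Finset.mul_sum, Finset.mul_sum,
    ← Finset.sum_add_distrib, Finset.mul_sum, Finset.mul_sum, Finset.mul_sum,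
    ← Finset.sum_sub_distrib]
  refine Finset.sum_congr rfl (fun i _ => ?_)
  simp
  ring

lemma aux_lap_nonpos {N : ℕ} {Ω : Set (EuclideanSpace ℝ (Fin N))}
    (hΩo : IsOpen Ω) (hΩb : Bornology.IsBounded Ω)
    (η : EuclideanSpace ℝ (Fin N) → ℝ) (hη : ContDiff ℝ 2 η)
    (hηpos : ∀ x ∈ Ω, 0 < η x) (hηbd : ∀ x ∈ frontier Ω, η x = 0)
    (hηgrad : ∀ x ∈ frontier Ω, 0 < ‖gradient η x‖)
    (f : EuclideanSpace ℝ (Fin N) → ℝ)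
    (hf2 : ∀ x ∈ closure Ω, DifferentiableAt ℝ (fun y => fderiv ℝ f y) x)
    (hf3 : ContinuousOn (fun x => fderiv ℝ (fun y => fderiv ℝ f y) x) (closure Ω))
    (hN : ∀ x ∈ frontier Ω, ⟪gradient f x, gradient η x⟫ = 0) :
    ∫ x in Ω, spaceLaplacian f x ≤ 0 := by
  have hflipf : ∀ i : Fin N, ContinuousOn (fun x => (fderiv ℝ (fun y => fderiv ℝ f y) x).flip
      (EuclideanSpace.single i (1:ℝ))) (closure Ω) := fun i =>
    ((ContinuousLinearMap.flipₗᵢ ℝ _ _ _).continuous.comp_continuousOn hf3).clm_apply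
      continuousOn_const
  have key := aux_div hΩo hΩb η hη hηpos hηbd hηgrad
    (fun i x => fderiv ℝ f x (EuclideanSpace.single i 1))
    (fun i x => (fderiv ℝ (fun y => fderiv ℝ f y) x).flip (EuclideanSpace.single i 1))
    (fun i x hx => aux_comp (hf2 x hx) _) hflipf
    (fun x hx => by rw [aux_inner, hN x hx])
  refine le_of_eq_of_le (setIntegral_congr_fun hΩo.measurableSet ?_) key
  intro x hx
  simp only
  rw [aux_lap (hf2 x (subset_closure hx))]
  rfl

lemma aux_gronwall {a b m : ℝ} (hab : a ≤ b) (u u' f : ℝ → ℝ)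
    (hu : ∀ t ∈ Icc a b, HasDerivAt u (u' t) t) (hf : ContinuousOn f (Icc a b))
    (h : ∀ t ∈ Icc a b, u' t ≤ -m * u t + f t) :
    exp (m * b) * u b - exp (m * a) * u a ≤ ∫ t in a..b, exp (m * t) * f t := by
  have hd : ∀ t ∈ Icc a b, HasDerivAt (fun t => exp (m * t) * u t)
      (exp (m * t) * m * u t + exp (m * t) * u' t) t := by
    intro t ht
    have h1 : HasDerivAt (fun t => exp (m * t)) (exp (m * t) * m) t := by
      simpa using ((hasDerivAt_id t).const_mul m).exp
    exact h1.mul (hu t ht)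
  refine intervalIntegral.sub_le_integral_of_hasDeriv_right_of_le hab
    (fun t ht => (hd t ht).continuousAt.continuousWithinAt)
    (fun t ht => (hd t (Ioo_subset_Icc_self ht)).hasDerivWithinAt) ?_ ?_
  · have hc : ContinuousOn (fun t => exp (m * t)) (Icc a b) := by fun_prop
    exact (hc.mul hf).integrableOn_compact isCompact_Icc
  · intro t ht
    have h1 := h t (Ioo_subset_Icc_self ht)
    have h2 := exp_pos (m * t)
    nlinarith

lemma aux_time {N : ℕ} {Ω : Set (EuclideanSpace ℝ (Fin N))} (hΩo : IsOpen Ω)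
    (hΩb : Bornology.IsBounded Ω) {T : ℝ}
    (q qt : ℝ × EuclideanSpace ℝ (Fin N) → ℝ)
    (hq : ContinuousOn q (Icc 0 T ×ˢ closure Ω))
    (hd : ∀ p ∈ Ioo 0 T ×ˢ closure Ω, HasDerivAt (fun τ => q (τ, p.2)) (qt p) p.1)
    (hqt : ContinuousOn qt (Ioo 0 T ×ˢ closure Ω))
    (φ : EuclideanSpace ℝ (Fin N) → ℝ) (hφ : Continuous φ) (t : ℝ) (ht : t ∈ Ioo 0 T) :
    HasDerivAt (fun t => ∫ x in Ω, q (t, x) * φ x) (∫ x in Ω, qt (t, x) * φ x) t := by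
  obtain ⟨ε, hε, hεs⟩ := Metric.nhds_basis_closedBall.mem_iff.1 (isOpen_Ioo.mem_nhds ht)
  have hK : IsCompact (Metric.closedBall t ε ×ˢ closure Ω) :=
    (isCompact_closedBall t ε).prod hΩb.isCompact_closure
  have hsub : Metric.closedBall t ε ×ˢ closure Ω ⊆ Ioo 0 T ×ˢ closure Ω :=
    prod_mono hεs subset_rfl
  have hcc : ContinuousOn (fun p : ℝ × EuclideanSpace ℝ (Fin N) => qt p * φ p.2)
      (Metric.closedBall t ε ×ˢ closure Ω) :=
    (hqt.mono hsub).mul (hφ.comp continuous_snd).continuousOn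
  obtain ⟨B, hB⟩ := hK.exists_bound_of_continuousOn hcc
  have hslice : ∀ τ : ℝ, ContinuousOn (fun x : EuclideanSpace ℝ (Fin N) => (τ, x)) (closure Ω) :=
    fun τ => by fun_prop
  refine (hasDerivAt_integral_of_dominated_loc_of_deriv_le (μ := volume.restrict Ω)
    (F := fun t x => q (t, x) * φ x) (F' := fun t x => qt (t, x) * φ x)
    (bound := fun _ => B) (s := Metric.closedBall t ε) (Metric.closedBall_mem_nhds t hε)
    ?_ ?_ ?_ ?_ ?_ ?_).2
  · filter_upwards [isOpen_Ioo.mem_nhds ht] with τ hτ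
    exact (aux_intOn hΩb ((hq.comp (hslice τ) (fun x hx => ⟨Ioo_subset_Icc_self hτ, hx⟩)).mul
      hφ.continuousOn)).aestronglyMeasurable
  · exact (aux_intOn hΩb ((hq.comp (hslice t) (fun x hx => ⟨Ioo_subset_Icc_self ht, hx⟩)).mul
      hφ.continuousOn))
  · exact (aux_intOn hΩb ((hqt.comp (hslice t) (fun x hx => ⟨ht, hx⟩)).mul
      hφ.continuousOn)).aestronglyMeasurable
  · filter_upwards [ae_restrict_mem hΩo.measurableSet] with x hx τ hτ
    exact hB (τ, x) ⟨hτ, subset_closure hx⟩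
  · exact aux_intOn hΩb (g := fun _ => B) continuousOn_const
  · filter_upwards [ae_restrict_mem hΩo.measurableSet] with x hx τ hτ
    exact (hd (τ, x) ⟨hεs hτ, subset_closure hx⟩).mul_const (φ x)

lemma aux_W {N : ℕ} {Ω ω : Set (EuclideanSpace ℝ (Fin N))}
    (hΩb : Bornology.IsBounded Ω) (hωo : IsOpen ω) (hωΩ : ω ⊆ Ω) {T : ℝ}
    (q : ℝ × EuclideanSpace ℝ (Fin N) → ℝ)
    (hq : ContinuousOn q (Icc 0 T ×ˢ closure Ω)) :
    ContinuousOn (fun t => ∫ x in ω, q (t, x)) (Icc 0 T) := by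
  obtain ⟨B, hB⟩ := (isCompact_Icc.prod hΩb.isCompact_closure).exists_bound_of_continuousOn hq
  apply continuousOn_of_dominated (bound := fun _ => B)
  · intro t ht
    refine (IntegrableOn.mono_set (aux_intOn hΩb (hq.comp ?_ (fun x hx => ⟨ht, hx⟩)))
      hωΩ).aestronglyMeasurable
    fun_prop
  · intro t ht
    filter_upwards [ae_restrict_mem hωo.measurableSet] with x hx
    exact hB _ ⟨ht, subset_closure (hωΩ hx)⟩
  · exact IntegrableOn.mono_set (aux_intOn hΩb (g := fun _ => B) continuousOn_const) hωΩ
  · filter_upwards [ae_restrict_mem hωo.measurableSet] with x hx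
    exact hq.comp (by fun_prop) (fun t ht => ⟨ht, subset_closure (hωΩ hx)⟩)

lemma aux_ess {N : ℕ} {Ω : Set (EuclideanSpace ℝ (Fin N))} (hΩo : IsOpen Ω) {T : ℝ}
    (a : ℝ × EuclideanSpace ℝ (Fin N) → ℝ)
    (hB : ∃ B : ℝ, ∀ p ∈ Set.Ioo (0:ℝ) T ×ˢ Ω, |a p| ≤ B)
    (q g : ℝ × EuclideanSpace ℝ (Fin N) → ℝ)
    (hq : ContinuousOn q (Ioo 0 T ×ˢ Ω)) (hg : ContinuousOn g (Ioo 0 T ×ˢ Ω))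
    (hq0 : ∀ p ∈ Ioo 0 T ×ˢ Ω, 0 ≤ q p)
    (h : ∀ p ∈ Ioo 0 T ×ˢ Ω, g p = a p * q p) :
    ∀ p ∈ Ioo 0 T ×ˢ Ω,
      |g p| ≤ (eLpNorm a ⊤ (volume.restrict (Set.Ioo (0:ℝ) T ×ˢ Ω))).toReal * q p := by
  set S : Set (ℝ × EuclideanSpace ℝ (Fin N)) := Ioo (0:ℝ) T ×ˢ Ω with hS
  have hSo : IsOpen S := isOpen_Ioo.prod hΩo
  set A := (eLpNorm a ⊤ (volume.restrict S)).toReal with hA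
  obtain ⟨B, hB⟩ := hB
  have hfin : eLpNorm a ⊤ (volume.restrict S) ≠ ⊤ := by
    have : eLpNorm a ⊤ (volume.restrict S) ≤ ENNReal.ofReal B := by
      rw [eLpNorm_exponent_top]
      apply eLpNormEssSup_le_of_ae_bound
      filter_upwards [ae_restrict_mem hSo.measurableSet] with p hp using hB p hp
    exact ne_top_of_le_ne_top ENNReal.ofReal_ne_top this
  have hae : ∀ᵐ p ∂(volume.restrict S), |a p| ≤ A := by
    filter_upwards [ae_le_eLpNormEssSup (f := a) (μ := volume.restrict S)] with p hp
    rw [← eLpNorm_exponent_top] at hp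
    have := ENNReal.toReal_mono hfin hp
    rw [hA]
    simpa only [toReal_enorm, Real.norm_eq_abs] using this
  have hUo : IsOpen (S ∩ (fun p => |g p| - A * q p) ⁻¹' Ioi 0) :=
    (hg.abs.sub (continuousOn_const.mul hq)).isOpen_inter_preimage hSo isOpen_Ioi
  intro p hp
  by_contra hcon
  have hne : (S ∩ (fun p => |g p| - A * q p) ⁻¹' Ioi 0).Nonempty := ⟨p, hp, by
    simp only [mem_preimage, mem_Ioi]; linarith [not_le.1 hcon]⟩
  have hpos := hUo.measure_pos volume hne
  rw [ae_restrict_iff' hSo.measurableSet] at hae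
  have hz : volume (S ∩ (fun p => |g p| - A * q p) ⁻¹' Ioi 0) = 0 := by
    refine measure_mono_null ?_ (ae_iff.1 hae)
    rintro x ⟨hx, hx2⟩ 
    simp only [mem_preimage, mem_Ioi] at hx2
    intro hx3
    have := hx3 hx
    rw [h x hx, abs_mul, abs_of_nonneg (hq0 x hx)] at hx2
    nlinarith [hq0 x hx]
  exact hpos.ne' hz

lemma aux_m {c D M A T s k : ℝ} (hc : 0 < c) (hD : 0 ≤ D) (hM : 0 ≤ M)
    (hA : 0 ≤ A) (hT : 0 < T) (hk : k = 1 + (4 * D + 8 + 4 * (M + 1)) / c)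
    (hs : s = k * (1 + 1 / T + √A)) : 0 ≤ c * s ^ 2 - D * s - A := by
  have hk1 : 1 ≤ k := by
    have : 0 ≤ (4 * D + 8 + 4 * (M + 1)) / c := by positivity
    rw [hk]; linarith
  have hkc : 4 * D + 8 + 4 * (M + 1) ≤ k * c := by
    rw [hk, add_mul, div_mul_cancel₀ _ hc.ne']; linarith
  have hA0 := Real.sqrt_nonneg A
  have hAs := Real.sq_sqrt hA
  have hT1 : 0 < 1 / T := by positivity
  have hsk : k ≤ s := by rw [hs]; nlinarith
  have hs1 : 1 ≤ s := hk1.trans hsk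
  have hsA : k * A ≤ s ^ 2 := by
    have : k * √A ≤ s := by rw [hs]; nlinarith
    calc k * A ≤ k * (k * A) := by nlinarith [mul_nonneg (by linarith : (0:ℝ) ≤ k) hA]
      _ = (k * √A) ^ 2 := by rw [mul_pow, hAs]; ring
      _ ≤ s ^ 2 := by gcongr
  have e1 : D * s ≤ c * s ^ 2 / 4 := by
    have : 4 * D ≤ s * c := by nlinarith
    nlinarith
  have e2 : 2 * A ≤ c * s ^ 2 / 4 := by
    have : 8 * A ≤ k * c * A := by nlinarith
    nlinarith
  nlinarith

set_option maxHeartbeats 1000000 in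
lemma aux_final {c D M A T s E0 E1 J0 J1 I k : ℝ} (hc : 0 < c) (hD : 0 ≤ D) (hM : 0 ≤ M)
    (hA : 0 ≤ A) (hT : 0 < T) (hk : k = 1 + (4 * D + 8 + 4 * (M + 1)) / c)
    (hs : s = k * (1 + 1 / T + √A)) (hE0 : 0 ≤ E0) (hI : 0 ≤ I)
    (h1 : E0 ≤ exp (A * (T / 2)) * E1) (h2 : E1 ≤ J1) (h3 : J0 ≤ exp (s * M) * E0)
    (h4 : J1 ≤ exp (-((c * s ^ 2 - D * s - A) * (T / 2))) * J0 + c * s ^ 2 * exp (s * M) * I) :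
    E0 ≤ exp ((2 * c + k * (2 + M) + 1) * (1 + 1 / T + T * A + √A)) * I := by
  have hk1 : 1 ≤ k := by
    have : 0 ≤ (4 * D + 8 + 4 * (M + 1)) / c := by positivity
    rw [hk]; linarith
  have hkc : 4 * D + 8 + 4 * (M + 1) ≤ k * c := by
    rw [hk, add_mul, div_mul_cancel₀ _ hc.ne']; linarith
  have hA0 := Real.sqrt_nonneg A
  have hAs := Real.sq_sqrt hA
  have hT1 : 0 < 1 / T := by positivity
  have hsk : k ≤ s := by rw [hs]; nlinarith
  have hs1 : 1 ≤ s := hk1.trans hsk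
  have hsT : k ≤ s * T := by
    rw [hs]
    have : k * (1 + 1 / T + √A) * T = k * (T + 1 + √A * T) := by field_simp
    rw [this]
    have : 0 ≤ √A * T := by positivity
    nlinarith
  have hsA : k * A ≤ s ^ 2 := by
    have : k * √A ≤ s := by rw [hs]; nlinarith
    calc k * A ≤ k * (k * A) := by nlinarith [mul_nonneg (by linarith : (0:ℝ) ≤ k) hA]
      _ = (k * √A) ^ 2 := by rw [mul_pow, hAs]; ring
      _ ≤ s ^ 2 := by gcongr
  have e1 : D * s ≤ c * s ^ 2 / 4 := by
    have : 4 * D ≤ s * c := by nlinarith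
    nlinarith
  have e2 : 2 * A ≤ c * s ^ 2 / 4 := by
    have : 8 * A ≤ k * c * A := by nlinarith
    nlinarith
  have e3 : s * M + 1 ≤ (c * s ^ 2 / 2) * (T / 2) := by
    have h5 : 4 * (M + 1) ≤ c * (s * T) := by nlinarith
    nlinarith
  have e4 : -((c * s ^ 2 - D * s - A) * (T / 2)) + s * M + A * (T / 2) ≤ -1 := by
    have : (c * s ^ 2 / 2) * (T / 2) ≤ (c * s ^ 2 - D * s - 2 * A) * (T / 2) := by
      gcongr; linarith
    nlinarith
  set P := exp (A * (T / 2)) with hP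
  set R := exp (-((c * s ^ 2 - D * s - A) * (T / 2))) with hR
  have hPp : 0 < P := exp_pos _
  have hRp : 0 < R := exp_pos _
  have h6 : E0 ≤ P * (R * (exp (s * M) * E0) + c * s ^ 2 * exp (s * M) * I) := by
    refine h1.trans ?_
    gcongr
    refine h2.trans (h4.trans ?_)
    gcongr
  have h7 : P * R * exp (s * M) ≤ 1 / 2 := by
    rw [hP, hR, ← exp_add, ← exp_add]
    calc _ ≤ exp (-1) := by apply exp_le_exp.2; linarith
      _ ≤ 1 / 2 := by
        rw [exp_neg, inv_le_comm₀ (exp_pos _) (by norm_num)]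
        linarith [Real.add_one_le_exp (1:ℝ)]
  have h8 : E0 ≤ 2 * c * s ^ 2 * (P * exp (s * M)) * I := by
    have h7' := mul_le_mul_of_nonneg_right h7 hE0
    have e5 : P * (R * (exp (s * M) * E0) + c * s ^ 2 * exp (s * M) * I) =
      P * R * exp (s * M) * E0 + c * s ^ 2 * (P * exp (s * M)) * I := by ring
    rw [e5] at h6
    linarith
  refine h8.trans ?_
  gcongr
  have h9 : 2 * c ≤ exp (2 * c) := by linarith [Real.add_one_le_exp (2 * c)]
  have h10 : s ^ 2 ≤ exp (2 * s) := by
    have : s ≤ exp s := by linarith [Real.add_one_le_exp s]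
    calc s ^ 2 ≤ (exp s) ^ 2 := by gcongr
      _ = exp (2 * s) := by rw [← exp_nat_mul]; norm_num
  calc 2 * c * s ^ 2 * (P * exp (s * M)) ≤ exp (2 * c) * exp (2 * s) * (P * exp (s * M)) := by
        gcongr
    _ = exp (2 * c + 2 * s + (A * (T / 2) + s * M)) := by rw [hP, ← exp_add, ← exp_add, ← exp_add]
    _ ≤ _ := by
      apply exp_le_exp.2
      have hTA : 0 ≤ T * A := by positivity
      have : 2 * s + s * M = k * (2 + M) * (1 + 1 / T + √A) := by rw [hs]; ring
      have hkM : 0 ≤ k * (2 + M) := by positivity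
      have : 2 * c + 2 * s + (A * (T / 2) + s * M) =
        2 * c + k * (2 + M) * (1 + 1 / T + √A) + T * A / 2 := by rw [← this]; ring
      rw [this]
      nlinarith [mul_nonneg hkM hTA, mul_nonneg hc.le hTA, mul_nonneg hc.le hT1.le,
        mul_nonneg hc.le hA0]

set_option maxHeartbeats 2000000 in
theorem observability_L1_at_quarter_time
    (N : ℕ) (hN : 1 ≤ N)
    (Ω ω₀ ω : Set (EuclideanSpace ℝ (Fin N)))
    (hΩo : IsOpen Ω) (hΩb : Bornology.IsBounded Ω) (hΩc : IsConnected Ω)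
    (hω₀o : IsOpen ω₀) (hω₀ne : ω₀.Nonempty) (hωo : IsOpen ω) (hωne : ω.Nonempty)
    (hω₀ω : closure ω₀ ⊆ ω) (hωΩ : ω ⊆ Ω)
    (η : EuclideanSpace ℝ (Fin N) → ℝ) (hη : ContDiff ℝ 2 η)
    (hηpos : ∀ x ∈ Ω, 0 < η x) (hηbd : ∀ x ∈ frontier Ω, η x = 0)
    (hηgrad : ∀ x ∈ closure (Ω \ ω₀), 0 < ‖gradient η x‖) :
    ∃ C > (0:ℝ),
      ∀ T : ℝ, 0 < T →
      ∀ a : ℝ × EuclideanSpace ℝ (Fin N) → ℝ, Measurable a →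
      (∃ B : ℝ, ∀ p ∈ Set.Ioo (0:ℝ) T ×ˢ Ω, |a p| ≤ B) →
      ∀ q qt : ℝ × EuclideanSpace ℝ (Fin N) → ℝ,
        ContinuousOn q (Set.Icc 0 T ×ˢ closure Ω) →
        (∀ p ∈ Set.Icc 0 T ×ˢ closure Ω, 0 ≤ q p) →
        (∀ p ∈ Set.Ioo 0 T ×ˢ closure Ω,
          HasDerivAt (fun τ => q (τ, p.2)) (qt p) p.1) →
        ContinuousOn qt (Set.Ioo 0 T ×ˢ closure Ω) →
        (∀ p ∈ Set.Ioo 0 T ×ˢ closure Ω,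
          DifferentiableAt ℝ (fun z => q (p.1, z)) p.2) →
        (∀ p ∈ Set.Ioo 0 T ×ˢ closure Ω,
          DifferentiableAt ℝ (fun y => fderiv ℝ (fun z => q (p.1, z)) y) p.2) →
        ContinuousOn (fun p : ℝ × EuclideanSpace ℝ (Fin N) =>
          fderiv ℝ (fun z => q (p.1, z)) p.2) (Set.Ioo 0 T ×ˢ closure Ω) →
        ContinuousOn (fun p : ℝ × EuclideanSpace ℝ (Fin N) =>
          fderiv ℝ (fun y => fderiv ℝ (fun z => q (p.1, z)) y) p.2)
          (Set.Ioo 0 T ×ˢ closure Ω) →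
        (∀ t ∈ Set.Ioo (0:ℝ) T, ∀ x ∈ Ω,
          -qt (t, x) - spaceLaplacian (fun z => q (t, z)) x
            + a (t, x) * q (t, x) = 0) →
        (∀ t ∈ Set.Ioo (0:ℝ) T, ∀ x ∈ frontier Ω,
          ⟪gradient (fun z => q (t, z)) x, gradient η x⟫ = 0) →
        (∫ x in Ω, q (T/4, x))
          ≤ Real.exp (C * (1 + 1/T + T * (eLpNorm a ⊤ (volume.restrict (Set.Ioo (0:ℝ) T ×ˢ Ω))).toReal + Real.sqrt (eLpNorm a ⊤ (volume.restrict (Set.Ioo (0:ℝ) T ×ˢ Ω))).toReal)) *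
            ∫ t in Set.Ioo (0:ℝ) T, ∫ x in ω, q (t, x) := by
  have hcpt := hΩb.isCompact_closure
  have hηf : ContDiff ℝ 1 (fderiv ℝ η) := hη.fderiv_right (by norm_num)
  have hη0 : Continuous η := hη.continuous
  have hη1 : Continuous (fderiv ℝ η) := hηf.continuous
  have hηff : Continuous (fderiv ℝ (fderiv ℝ η)) := hηf.continuous_fderiv (by norm_num)
  have hηfd : Differentiable ℝ (fderiv ℝ η) := hηf.differentiable (by norm_num)
  have hgc : Continuous (gradient η) :=
    (InnerProductSpace.toDual ℝ (EuclideanSpace ℝ (Fin N))).symm.continuous.comp hη1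
  have hLc : Continuous (spaceLaplacian η) := by
    have : spaceLaplacian η = fun x => ∑ i, fderiv ℝ (fun y => fderiv ℝ η y) x
      (EuclideanSpace.single i 1) (EuclideanSpace.single i 1) := by
      ext x; exact aux_lap (hηfd x)
    rw [this]
    exact continuous_finsetSum _ (fun i _ =>
      (hηff.clm_apply continuous_const).clm_apply continuous_const)
  have hfr : ∀ x ∈ frontier Ω, 0 < ‖gradient η x‖ := by
    intro x hx
    apply hηgrad
    rw [hΩo.frontier_eq] at hx
    have hx0 : x ∉ closure ω₀ := fun h => hx.2 (hωΩ (hω₀ω h))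
    have h1 : x ∈ closure (Ω ∩ (closure ω₀)ᶜ) :=
      isClosed_closure.isOpen_compl.closure_inter ⟨hx.1, hx0⟩
    exact closure_mono (show Ω ∩ (closure ω₀)ᶜ ⊆ Ω \ ω₀ from
      fun y hy => ⟨hy.1, fun h => hy.2 (subset_closure h)⟩) h1
  obtain ⟨c, hc, hcG⟩ : ∃ c > 0, ∀ x ∈ closure (Ω \ ω₀), c ≤ ‖gradient η x‖ ^ 2 := by
    refine IsCompact.exists_forall_le' ?_ ((hgc.norm.pow 2).continuousOn)
      (fun x hx => pow_pos (hηgrad x hx) 2)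
    exact hcpt.of_isClosed_subset isClosed_closure (closure_mono sdiff_subset)
  obtain ⟨D, hD⟩ := hcpt.exists_bound_of_continuousOn hLc.continuousOn
  obtain ⟨M, hM⟩ := hcpt.exists_bound_of_continuousOn hη0.continuousOn
  obtain ⟨x₀, hx₀⟩ := hωne
  have hx₀' := subset_closure (hωΩ hx₀)
  have hD0 : 0 ≤ D := (norm_nonneg _).trans (hD x₀ hx₀')
  have hM0 : 0 ≤ M := (norm_nonneg _).trans (hM x₀ hx₀')
  obtain ⟨k, hk⟩ : ∃ k, k = 1 + (4 * D + 8 + 4 * (M + 1)) / c := ⟨_, rfl⟩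
  have hk0 : 0 < k := by rw [hk]; positivity
  refine ⟨2 * c + k * (2 + M) + 1, by positivity, ?_⟩
  intro T hT a ham hab q qt hq hq0 hqd hqt hf1 hf2 hf1c hf2c hpde hNeu
  set A := (eLpNorm a ⊤ (volume.restrict (Set.Ioo (0:ℝ) T ×ˢ Ω))).toReal with hA
  have hA0 : 0 ≤ A := ENNReal.toReal_nonneg
  obtain ⟨s, hs⟩ : ∃ s, s = k * (1 + 1 / T + √A) := ⟨_, rfl⟩
  have hs0 : 0 < s := by rw [hs]; positivity
  have hsl : ∀ t : ℝ, ContinuousOn (fun x : EuclideanSpace ℝ (Fin N) => (t, x)) (closure Ω) :=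
    fun t => by fun_prop
  have hLap : ContinuousOn (fun p : ℝ × EuclideanSpace ℝ (Fin N) =>
      spaceLaplacian (fun z => q (p.1, z)) p.2) (Ioo 0 T ×ˢ closure Ω) := by
    have h1 : ContinuousOn (fun p : ℝ × EuclideanSpace ℝ (Fin N) =>
      ∑ i, fderiv ℝ (fun y => fderiv ℝ (fun z => q (p.1, z)) y) p.2
        (EuclideanSpace.single i 1) (EuclideanSpace.single i 1)) (Ioo 0 T ×ˢ closure Ω) :=
      continuousOn_finsetSum _ (fun i _ =>
        (hf2c.clm_apply continuousOn_const).clm_apply continuousOn_const)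
    exact h1.congr (fun p hp => aux_lap (hf2 p hp))
  have hsubI : Ioo 0 T ×ˢ Ω ⊆ Ioo 0 T ×ˢ closure Ω := prod_mono subset_rfl subset_closure
  have hsubII : Ioo 0 T ×ˢ closure Ω ⊆ Icc 0 T ×ˢ closure Ω :=
    prod_mono Ioo_subset_Icc_self subset_rfl
  have hess := aux_ess hΩo a hab q
    (fun p => qt p + spaceLaplacian (fun z => q (p.1, z)) p.2)
    (hq.mono (hsubI.trans hsubII)) ((hqt.add hLap).mono hsubI)
    (fun p hp => hq0 p (hsubII (hsubI hp)))
    (fun p hp => by have := hpde p.1 hp.1 p.2 hp.2; linarith)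
  rw [← hA] at hess
  have cq : ∀ t ∈ Ioo 0 T, ContinuousOn (fun x => q (t, x)) (closure Ω) := fun t ht =>
    hq.comp (hsl t) (fun x hx => ⟨Ioo_subset_Icc_self ht, hx⟩)
  have cqt : ∀ t ∈ Ioo 0 T, ContinuousOn (fun x => qt (t, x)) (closure Ω) := fun t ht =>
    hqt.comp (hsl t) (fun x hx => ⟨ht, hx⟩)
  have cL : ∀ t ∈ Ioo 0 T, ContinuousOn (fun x => spaceLaplacian (fun z => q (t, z)) x)
      (closure Ω) := fun t ht =>
    hLap.comp (hsl t) (fun x hx => ⟨ht, hx⟩)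
  have cf2 : ∀ t ∈ Ioo 0 T, ContinuousOn (fun x => fderiv ℝ (fun y => fderiv ℝ
      (fun z => q (t, z)) y) x) (closure Ω) := fun t ht =>
    hf2c.comp (hsl t) (fun x hx => ⟨ht, hx⟩)
  have hexpc : Continuous fun x => exp (s * η x) := by fun_prop
  have hW := aux_W hΩb hωo hωΩ q hq
  have hIcc : Icc (T / 4) (3 * T / 4) ⊆ Ioo 0 T := by
    intro t ht
    exact ⟨by linarith [ht.1], by linarith [ht.2]⟩
  -- the weighted differential inequality
  have hJ' : ∀ t ∈ Ioo 0 T, ∫ x in Ω, qt (t, x) * exp (s * η x) ≤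
      -(c * s ^ 2 - D * s - A) * (∫ x in Ω, q (t, x) * exp (s * η x)) +
        c * s ^ 2 * exp (s * M) * ∫ x in ω, q (t, x) := by
    intro t ht
    have g := aux_green hΩo hΩb η hη hηpos hηbd hfr (fun x => q (t, x))
      (fun x hx => hq0 _ ⟨Ioo_subset_Icc_self ht, hx⟩) (fun x hx => hf1 (t, x) ⟨ht, hx⟩)
      (fun x hx => hf2 (t, x) ⟨ht, hx⟩) (cf2 t ht) (fun x hx => hNeu t ht x hx) s hs0.le
    have i1 : IntegrableOn (fun x => q (t, x) * (exp (s * η x) * (s ^ 2 * ‖gradient η x‖ ^ 2 +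
        s * spaceLaplacian η x)) - exp (s * η x) * spaceLaplacian (fun z => q (t, z)) x) Ω := by
      apply aux_intOn hΩb
      refine ((cq t ht).mul (Continuous.continuousOn ?_)).sub (hexpc.continuousOn.mul (cL t ht))
      fun_prop
    have i2 : IntegrableOn (fun x => q (t, x) * exp (s * η x)) Ω :=
      aux_intOn hΩb ((cq t ht).mul hexpc.continuousOn)
    have i3 : IntegrableOn (fun x => c * s ^ 2 * exp (s * M) * q (t, x)) Ω :=
      aux_intOn hΩb (continuousOn_const.mul (cq t ht))
    have i4 : IntegrableOn (fun x => qt (t, x) * exp (s * η x)) Ω :=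
      aux_intOn hΩb ((cqt t ht).mul hexpc.continuousOn)
    have i5 := i3.indicator hωo.measurableSet
    have i6 := i2.const_mul (-(c * s ^ 2 - D * s - A))
    have e1 : ∫ x in Ω, ω.indicator (fun x => c * s ^ 2 * exp (s * M) * q (t, x)) x =
        c * s ^ 2 * exp (s * M) * ∫ x in ω, q (t, x) := by
      rw [setIntegral_indicator hωo.measurableSet, inter_eq_right.2 hωΩ, integral_const_mul]
    have e2 : ∫ x in Ω, qt (t, x) * exp (s * η x) ≤ ∫ x in Ω,
        ((q (t, x) * (exp (s * η x) * (s ^ 2 * ‖gradient η x‖ ^ 2 +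
        s * spaceLaplacian η x)) - exp (s * η x) * spaceLaplacian (fun z => q (t, z)) x) +
        (-(c * s ^ 2 - D * s - A) * (q (t, x) * exp (s * η x)) +
        ω.indicator (fun x => c * s ^ 2 * exp (s * M) * q (t, x)) x)) := by
      refine setIntegral_mono_on i4 (i1.add (i6.add i5)) hΩo.measurableSet ?_
      intro x hx
      have hxc := subset_closure hx
      have b1 := hess (t, x) ⟨ht, hx⟩
      have b2 := hD x hxc
      have b3 := hM x hxc
      have b4 := hq0 (t, x) ⟨Ioo_subset_Icc_self ht, hxc⟩
      simp only at b1
      rw [Real.norm_eq_abs] at b2 b3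
      have b1' := (abs_le.1 b1).2
      have b2' := (abs_le.1 b2).1
      have b3' := (abs_le.1 b3).2
      have b5 : exp (s * η x) ≤ exp (s * M) := exp_le_exp.2 (by gcongr)
      have b6 := exp_pos (s * η x)
      have b7 : exp (s * η x) * (qt (t, x) + spaceLaplacian (fun z => q (t, z)) x) ≤
        exp (s * η x) * (A * q (t, x)) := by gcongr
      have b8 : 0 ≤ q (t, x) * exp (s * η x) := by positivity
      have b9 : 0 ≤ (q (t, x) * exp (s * η x)) * (s * (spaceLaplacian η x + D)) := by
        apply mul_nonneg b8 (mul_nonneg hs0.le (by linarith))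
      by_cases hxω : x ∈ ω
      · rw [indicator_of_mem hxω]
        have b10 : 0 ≤ (q (t, x) * exp (s * η x)) * (s ^ 2 * ‖gradient η x‖ ^ 2) := by positivity
        have b11 : c * s ^ 2 * exp (s * η x) * q (t, x) ≤ c * s ^ 2 * exp (s * M) * q (t, x) := by
          gcongr
        linarith
      · rw [indicator_of_notMem hxω]
        have hxx : x ∈ closure (Ω \ ω₀) :=
          subset_closure ⟨hx, fun h => hxω (hω₀ω (subset_closure h))⟩
        have b10 : 0 ≤ (q (t, x) * exp (s * η x)) * (s ^ 2 * (‖gradient η x‖ ^ 2 - c)) := by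
          apply mul_nonneg b8 (mul_nonneg (by positivity) (by linarith [hcG x hxx]))
        linarith
    have i7 : Integrable (fun x => -(c * s ^ 2 - D * s - A) * (q (t, x) * exp (s * η x)) +
        ω.indicator (fun x => c * s ^ 2 * exp (s * M) * q (t, x)) x) (volume.restrict Ω) :=
      i6.add i5
    rw [integral_add i1 i7, integral_add i6 i5, e1, integral_const_mul] at e2
    linarith
  -- mass
  have hE' : ∀ t ∈ Ioo 0 T, -(A * ∫ x in Ω, q (t, x)) ≤ ∫ x in Ω, qt (t, x) := by
    intro t ht
    have g := aux_lap_nonpos hΩo hΩb η hη hηpos hηbd hfr (fun x => q (t, x))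
      (fun x hx => hf2 (t, x) ⟨ht, hx⟩) (cf2 t ht) (fun x hx => hNeu t ht x hx)
    have i1 := aux_intOn hΩb (cqt t ht)
    have i2 := aux_intOn hΩb (cL t ht)
    have i3 := aux_intOn hΩb (cq t ht)
    have e : ∫ x in Ω, -(A * q (t, x)) ≤
        ∫ x in Ω, (qt (t, x) + spaceLaplacian (fun z => q (t, z)) x) := by
      refine setIntegral_mono_on (i3.const_mul A).neg (i1.add i2) hΩo.measurableSet ?_
      intro x hx
      exact (abs_le.1 (hess (t, x) ⟨ht, hx⟩)).1
    rw [integral_add i1 i2, integral_neg, integral_const_mul] at e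
    linarith
  have hTT : T / 4 ≤ 3 * T / 4 := by linarith
  have G1 := aux_gronwall (m := A) hTT (fun t => -∫ x in Ω, q (t, x))
    (fun t => -∫ x in Ω, qt (t, x)) (fun _ => 0)
    (fun t ht => by
      have := (aux_time hΩo hΩb q qt hq hqd hqt (fun _ => 1) continuous_const t (hIcc ht)).neg
      simpa using! this)
    continuousOn_const
    (fun t ht => by linarith [hE' t (hIcc ht)])
  have hWc : ContinuousOn (fun t => ∫ x in ω, q (t, x)) (Icc (T / 4) (3 * T / 4)) :=
    hW.mono (hIcc.trans Ioo_subset_Icc_self)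
  have G2 := aux_gronwall (m := c * s ^ 2 - D * s - A) hTT
    (fun t => ∫ x in Ω, q (t, x) * exp (s * η x))
    (fun t => ∫ x in Ω, qt (t, x) * exp (s * η x))
    (fun t => c * s ^ 2 * exp (s * M) * ∫ x in ω, q (t, x))
    (fun t ht => aux_time hΩo hΩb q qt hq hqd hqt _ hexpc t (hIcc ht))
    (continuousOn_const.mul hWc)
    (fun t ht => hJ' t (hIcc ht))
  have hW0 : ∀ t ∈ Ioo 0 T, 0 ≤ ∫ x in ω, q (t, x) := fun t ht =>
    setIntegral_nonneg hωo.measurableSet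
      (fun x hx => hq0 _ ⟨Ioo_subset_Icc_self ht, subset_closure (hωΩ hx)⟩)
  have hWint : IntegrableOn (fun t => ∫ x in ω, q (t, x)) (Ioo 0 T) :=
    (hW.integrableOn_compact isCompact_Icc).mono_set Ioo_subset_Icc_self
  have hT4 : T / 4 ∈ Ioo 0 T := hIcc ⟨le_rfl, hTT⟩
  have hT34 : 3 * T / 4 ∈ Ioo 0 T := hIcc ⟨hTT, le_rfl⟩
  refine aux_final (E1 := ∫ x in Ω, q (3 * T / 4, x))
    (J0 := ∫ x in Ω, q (T / 4, x) * exp (s * η x))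
    (J1 := ∫ x in Ω, q (3 * T / 4, x) * exp (s * η x))
    hc hD0 hM0 hA0 hT hk hs ?_ ?_ ?_ ?_ ?_ ?_
  · exact setIntegral_nonneg hΩo.measurableSet
      (fun x hx => hq0 _ ⟨Ioo_subset_Icc_self hT4, subset_closure hx⟩)
  · exact setIntegral_nonneg measurableSet_Ioo hW0
  · simp only [mul_zero, intervalIntegral.integral_zero, mul_neg] at G1
    have e : exp (A * (3 * T / 4)) = exp (A * (T / 4)) * exp (A * (T / 2)) := by
      rw [← exp_add]; congr 1; ring
    rw [e] at G1
    have hp := exp_pos (A * (T / 4))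
    refine le_of_mul_le_mul_left ?_ hp
    linarith
  · refine setIntegral_mono_on (aux_intOn hΩb (cq _ hT34))
      (aux_intOn hΩb ((cq _ hT34).mul hexpc.continuousOn)) hΩo.measurableSet ?_
    intro x hx
    have b4 := hq0 (3 * T / 4, x) ⟨Ioo_subset_Icc_self hT34, subset_closure hx⟩
    have : 1 ≤ exp (s * η x) := Real.one_le_exp (mul_nonneg hs0.le (hηpos x hx).le)
    exact le_mul_of_one_le_right b4 this
  · rw [← integral_const_mul]
    refine setIntegral_mono_on (aux_intOn hΩb ((cq _ hT4).mul hexpc.continuousOn))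
      ((aux_intOn hΩb (cq _ hT4)).const_mul _) hΩo.measurableSet ?_
    intro x hx
    have b4 := hq0 (T / 4, x) ⟨Ioo_subset_Icc_self hT4, subset_closure hx⟩
    have b5 : exp (s * η x) ≤ exp (s * M) := by
      apply exp_le_exp.2
      gcongr
      exact (le_abs_self _).trans (hM x (subset_closure hx))
    rw [mul_comm]
    gcongr
  · have hm := aux_m hc hD0 hM0 hA0 hT hk hs
    set m := c * s ^ 2 - D * s - A with hmdef
    have hc1 : ContinuousOn (fun t => exp (m * t) * (c * s ^ 2 * exp (s * M) *
        ∫ x in ω, q (t, x))) (Icc (T / 4) (3 * T / 4)) :=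
      ContinuousOn.mul (by fun_prop) (continuousOn_const.mul hWc)
    have hc2 : ContinuousOn (fun t => exp (m * (3 * T / 4)) * (c * s ^ 2 * exp (s * M)) *
        ∫ x in ω, q (t, x)) (Icc (T / 4) (3 * T / 4)) :=
      continuousOn_const.mul hWc
    have G3 : ∫ t in (T / 4)..(3 * T / 4), exp (m * t) * (c * s ^ 2 * exp (s * M) *
        ∫ x in ω, q (t, x)) ≤ exp (m * (3 * T / 4)) * (c * s ^ 2 * exp (s * M)) *
        ∫ t in Ioo 0 T, ∫ x in ω, q (t, x) := by
      calc _ ≤ ∫ t in (T / 4)..(3 * T / 4), exp (m * (3 * T / 4)) * (c * s ^ 2 * exp (s * M)) *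
            ∫ x in ω, q (t, x) := by
            refine intervalIntegral.integral_mono_on hTT
              (hc1.intervalIntegrable_of_Icc hTT) (hc2.intervalIntegrable_of_Icc hTT) ?_
            intro t ht
            have h0 := hW0 t (hIcc ht)
            have h1 : exp (m * t) ≤ exp (m * (3 * T / 4)) := by
              apply exp_le_exp.2
              exact mul_le_mul_of_nonneg_left ht.2 hm
            rw [← mul_assoc]
            gcongr
        _ = exp (m * (3 * T / 4)) * (c * s ^ 2 * exp (s * M)) *
            ∫ t in Ioc (T / 4) (3 * T / 4), ∫ x in ω, q (t, x) := by
            rw [intervalIntegral.integral_const_mul, intervalIntegral.integral_of_le hTT]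
        _ ≤ _ := by
            gcongr ?_ * ?_
            refine setIntegral_mono_set hWint ?_ ?_
            · filter_upwards [ae_restrict_mem measurableSet_Ioo] with t ht using hW0 t ht
            · exact (Ioc_subset_Icc_self.trans hIcc).eventuallyLE
    have G4 := G2.trans G3
    have e : exp (m * (T / 4)) = exp (m * (3 * T / 4)) * exp (-(m * (T / 2))) := by
      rw [← exp_add]; congr 1; ring
    rw [e] at G4
    refine le_of_mul_le_mul_left ?_ (exp_pos (m * (3 * T / 4)))
    linarith
end

section
/- There exists a constant C > 0, depending only on Ω and η⁰, such that for every T > 0, every bounded measurable potential a, and every classical nonnegative solution q of the adjoint heat equation with Neumann boundary condition, one has (∫_Ω q(0,x)² dx)^{1/2} ≤ exp(C(1 + 1/T + T‖a‖_∞ + ‖a‖_∞^{1/2})) ∫_Ω q(T/4, x) dx. -/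
open MeasureTheory Real Set RealInnerProductSpace

section geom
variable {E : Type*} [NormedAddCommGroup E] [InnerProductSpace ℝ E] 

/-- a segment starting in `Ω` along which `η > 0` stays in `Ω`. -/
lemma aux_seg_mem {Ω : Set E} {η : E → ℝ} (hΩo : IsOpen Ω)
    (hηbd : ∀ x ∈ frontier Ω, η x = 0) {x y : E} (hx : x ∈ Ω)
    (h : ∀ z ∈ segment ℝ x y, 0 < η z) : y ∈ Ω := by
  have hc : IsPreconnected (segment ℝ x y) := (convex_segment x y).isPreconnected
  refine hc.subset_of_closure_inter_subset hΩo ⟨x, left_mem_segment ℝ x y, hx⟩ ?_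
    (right_mem_segment ℝ x y)
  rintro z ⟨hz, hzs⟩
  by_contra hzn
  have : z ∈ frontier Ω := by
    rw [hΩo.frontier_eq]; exact ⟨hz, hzn⟩
  have h2 := h z hzs
  rw [hηbd z this] at h2
  exact lt_irrefl _ h2

/-- growth along a segment -/
lemma aux_growth {η : E → ℝ} (hη : ContDiff ℝ 2 η) {y : E} {ρ c : ℝ} {w x : E} {t : ℝ}
    (hw : ∀ ξ ∈ Metric.ball y ρ, c ≤ fderiv ℝ η ξ w) (hx : x ∈ Metric.ball y ρ)
    (ht : 0 ≤ t) (hxt : x + t • w ∈ Metric.ball y ρ) :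
    η x + c * t ≤ η (x + t • w) := by
  have hd : Differentiable ℝ η := hη.differentiable (by norm_num)
  have hder : ∀ s : ℝ, HasDerivAt (fun s : ℝ => η (x + s • w)) (fderiv ℝ η (x + s • w) w) s := by
    intro s
    have h1 : HasDerivAt (fun s : ℝ => x + s • w) w s := by
      simpa using ((hasDerivAt_id s).smul_const w).const_add x
    exact (hd (x + s • w)).hasFDerivAt.comp_hasDerivAt s h1
  have key := Convex.mul_sub_le_image_sub_of_le_deriv (convex_Icc (0:ℝ) t)
    (f := fun s : ℝ => η (x + s • w)) (fun s _ => (hder s).continuousAt.continuousWithinAt)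
    (fun s _ => (hder s).differentiableAt.differentiableWithinAt) (C := c) ?_ 0
    (left_mem_Icc.mpr ht) t (right_mem_Icc.mpr ht) ht
  · simp at key; linarith
  · intro s hs
    rw [interior_Icc] at hs
    rw [(hder s).deriv]
    apply hw
    have hconv := convex_ball y ρ
    have : x + s • w = (1 - s/t) • x + (s/t) • (x + t • w) := by
      have ht0 : t ≠ 0 := by have := hs.1.trans hs.2; exact this.ne'
      rw [smul_add, smul_smul, div_mul_cancel₀ _ ht0]
      module
    rw [this]
    have htp : 0 < t := hs.1.trans hs.2
    exact hconv hx hxt (by rw [sub_nonneg, div_le_one htp]; exact hs.2.le)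
      (div_nonneg hs.1.le htp.le) (by ring)

variable [FiniteDimensional ℝ E]

lemma aux_local_pos {η : E → ℝ} (hη : ContDiff ℝ 2 η) {y : E} (hy : gradient η y ≠ 0) :
    ∃ ρ > 0, ∃ c > 0, ∀ ξ ∈ Metric.ball y ρ, ∀ w ∈ Metric.ball (gradient η y) ρ,
      c ≤ fderiv ℝ η ξ w := by
  have hcont : Continuous (fun p : E × E => fderiv ℝ η p.1 p.2) := by
    have := hη.continuous_fderiv (by norm_num)
    fun_prop
  have hpos : 0 < fderiv ℝ η y (gradient η y) := by
    have : fderiv ℝ η y (gradient η y) = ⟪gradient η y, gradient η y⟫ := by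
      rw [gradient, InnerProductSpace.toDual_symm_apply]
    rw [this]
    exact real_inner_self_pos.mpr hy
  set c := fderiv ℝ η y (gradient η y) / 2 with hc
  have : ∀ᶠ p in nhds (y, gradient η y), c < fderiv ℝ η p.1 p.2 :=
    hcont.continuousAt.eventually (lt_mem_nhds (show c < fderiv ℝ η y (gradient η y) by
      rw [hc]; linarith))
  obtain ⟨ρ, hρ, h⟩ := Metric.eventually_nhds_iff_ball.mp this
  refine ⟨ρ, hρ, c, by rw [hc]; linarith, fun ξ hξ w hw => (h (ξ, w) ?_).le⟩
  rw [← ball_prod_same]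
  exact ⟨hξ, hw⟩

/-- uniform interior cone condition -/
lemma aux_cone {Ω : Set E} {η : E → ℝ} (hΩo : IsOpen Ω)
    (hη : ContDiff ℝ 2 η) (hηpos : ∀ x ∈ Ω, 0 < η x) (hηbd : ∀ x ∈ frontier Ω, η x = 0)
    (hg : ∀ x ∈ frontier Ω, gradient η x ≠ 0) {y : E} (hy : y ∈ closure Ω) :
    ∃ ρ > 0, ∃ v : E, ∃ δ > 0, ∃ r₀ > 0, ∀ x ∈ Ω ∩ Metric.ball y ρ, ∀ r, 0 < r → r ≤ r₀ →
      ∀ k ∈ Metric.ball (r • v) (r * δ), ∀ s ∈ Icc (0:ℝ) 1, x + s • k ∈ Ω := by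
  by_cases hyΩ : y ∈ Ω
  · obtain ⟨ρ, hρ, hb⟩ := Metric.isOpen_iff.mp hΩo y hyΩ
    refine ⟨ρ/2, by positivity, 0, 1, one_pos, ρ/2, by positivity, ?_⟩
    rintro x ⟨hx, hxb⟩ r hr hr0 k hk s hs
    apply hb
    rw [Metric.mem_ball, dist_eq_norm] at *
    simp only [smul_zero, sub_zero, mul_one] at hk
    have : ‖s • k‖ ≤ ‖k‖ := by
      rw [norm_smul, Real.norm_of_nonneg hs.1]
      exact mul_le_of_le_one_left (norm_nonneg _) hs.2
    calc ‖x + s • k - y‖ = ‖(x - y) + s • k‖ := by congr 1; abel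
      _ ≤ ‖x - y‖ + ‖s • k‖ := norm_add_le _ _
      _ < ρ := by linarith
  · have hyf : y ∈ frontier Ω := by rw [hΩo.frontier_eq]; exact ⟨hy, hyΩ⟩
    obtain ⟨ρ, hρ, c, hc, h⟩ := aux_local_pos hη (hg y hyf)
    set v := gradient η y with hv
    refine ⟨ρ/2, by positivity, v, ρ, hρ, ρ / 2 / (‖v‖ + ρ), by positivity, ?_⟩
    rintro x ⟨hx, hxb⟩ r hr hr0 k hk s hs
    have hw : r⁻¹ • k ∈ Metric.ball v ρ := by
      rw [Metric.mem_ball, dist_eq_norm] at *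
      have : r⁻¹ • k - v = r⁻¹ • (k - r • v) := by
        rw [smul_sub, smul_smul, inv_mul_cancel₀ hr.ne', one_smul]
      rw [this, norm_smul, norm_inv, Real.norm_of_nonneg hr.le, inv_mul_lt_iff₀ hr]
      exact hk
    set w := r⁻¹ • k with hwd
    have hk2 : k = r • w := by rw [hwd, smul_smul, mul_inv_cancel₀ hr.ne', one_smul]
    have hwn : ‖w‖ ≤ ‖v‖ + ρ := by
      rw [Metric.mem_ball, dist_eq_norm] at hw
      have := norm_add_le (w - v) v
      rw [sub_add_cancel] at this
      linarith
    have hin : ∀ s ∈ Icc (0:ℝ) 1, x + s • k ∈ Metric.ball y ρ := by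
      intro s hs
      rw [Metric.mem_ball, dist_eq_norm] at *
      have h1 : ‖s • k‖ ≤ ‖k‖ := by
        rw [norm_smul, Real.norm_of_nonneg hs.1]
        exact mul_le_of_le_one_left (norm_nonneg _) hs.2
      have h2 : ‖k‖ ≤ ρ / 2 := by
        rw [hk2, norm_smul, Real.norm_of_nonneg hr.le]
        rw [le_div_iff₀ (by positivity)] at hr0
        exact (mul_le_mul_of_nonneg_left hwn hr.le).trans hr0
      calc ‖x + s • k - y‖ = ‖(x - y) + s • k‖ := by congr 1; abel
        _ ≤ ‖x - y‖ + ‖s • k‖ := norm_add_le _ _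
        _ < ρ := by linarith
    apply aux_seg_mem hΩo hηbd hx
    intro z hz
    rw [segment_eq_image'] at hz
    obtain ⟨θ, hθ, rfl⟩ := hz
    simp only [add_sub_cancel_left]
    have hθs : θ * s ∈ Icc (0:ℝ) 1 :=
      ⟨mul_nonneg hθ.1 hs.1, mul_le_one₀ hθ.2 hs.1 hs.2⟩
    have hm := hin _ hθs
    have e : (θ * s) • k = (θ * s * r) • w := by rw [hk2, smul_smul]
    rw [smul_smul]
    rw [e] at hm ⊢
    have h0 : 0 ≤ θ * s * r := mul_nonneg hθs.1 hr.le
    have := aux_growth hη (c := c) (fun ξ hξ => h ξ hξ w hw)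
      (Metric.ball_subset_ball (by linarith) hxb) h0 hm
    have := hηpos x hx
    have := mul_nonneg hc.le h0
    linarith

lemma aux_dist {Ω : Set E} {η : E → ℝ} (hΩo : IsOpen Ω) (hΩb : Bornology.IsBounded Ω)
    (hη : ContDiff ℝ 2 η) (hηpos : ∀ x ∈ Ω, 0 < η x) (hηbd : ∀ x ∈ frontier Ω, η x = 0)
    (hg : ∀ x ∈ frontier Ω, gradient η x ≠ 0) :
    ∃ K : ℝ, 0 ≤ K ∧ ∀ x ∈ Ω, Metric.infDist x Ωᶜ ≤ K * η x := by
  have hcomp : IsCompact (closure Ω) := hΩb.isCompact_closure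
  have := hcomp.induction_on
    (p := fun S => ∃ K : ℝ, 0 ≤ K ∧ ∀ x ∈ S ∩ Ω, Metric.infDist x Ωᶜ ≤ K * η x)
    ⟨0, le_rfl, by simp⟩
    (fun s t hst ⟨K, hK, h⟩ => ⟨K, hK, fun x hx => h x ⟨hst hx.1, hx.2⟩⟩)
    (fun s t ⟨K, hK, h⟩ ⟨K', hK', h'⟩ => ⟨K + K', by positivity, fun x hx => by
      have hp := hηpos x hx.2
      rcases hx.1 with hs | hs
      · have := h x ⟨hs, hx.2⟩; nlinarith
      · have := h' x ⟨hs, hx.2⟩; nlinarith⟩) ?_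
  · obtain ⟨K, hK, h⟩ := this
    exact ⟨K, hK, fun x hx => h x ⟨subset_closure hx, hx⟩⟩
  intro y hy
  by_cases hyΩ : y ∈ Ω
  · have hyp := hηpos y hyΩ
    have e1 : ∀ᶠ x in nhds y, η y / 2 < η x :=
      hη.continuous.continuousAt.eventually (lt_mem_nhds (by linarith))
    have e2 : ∀ᶠ x in nhds y, Metric.infDist x Ωᶜ < Metric.infDist y Ωᶜ + 1 :=
      (Metric.continuous_infDist_pt Ωᶜ).continuousAt.eventually (gt_mem_nhds (by linarith))
    refine ⟨_, mem_nhdsWithin_of_mem_nhds (e1.and e2),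
      (Metric.infDist y Ωᶜ + 1) / (η y / 2), ?_, ?_⟩
    · have := Metric.infDist_nonneg (x := y) (s := Ωᶜ)
      positivity
    · rintro x ⟨⟨h1, h2⟩, hx⟩
      have := Metric.infDist_nonneg (x := y) (s := Ωᶜ)
      rw [div_mul_eq_mul_div, le_div_iff₀ (by positivity)]
      apply mul_le_mul h2.le h1.le (by positivity) (by positivity)
  · have hyf : y ∈ frontier Ω := by rw [hΩo.frontier_eq]; exact ⟨hy, hyΩ⟩
    obtain ⟨ρ, hρ, c, hc, h⟩ := aux_local_pos hη (hg y hyf)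
    set v := gradient η y with hv
    have hvv : v ∈ Metric.ball v ρ := Metric.mem_ball_self hρ
    have ec : Continuous (fun x => x + (-(η x / c)) • v) := by
      have := hη.continuous
      fun_prop
    have e1 : ∀ᶠ x in nhds y, x + (-(η x / c)) • v ∈ Metric.ball y ρ := by
      apply ec.continuousAt.eventually
      apply Metric.isOpen_ball.mem_nhds
      simp [hηbd y hyf, hρ]
    have e2 : ∀ᶠ x in nhds y, x ∈ Metric.ball y ρ := Metric.ball_mem_nhds y hρ
    refine ⟨_, mem_nhdsWithin_of_mem_nhds (e1.and e2), ‖v‖ / c, by positivity, ?_⟩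
    rintro x ⟨⟨h1, h2⟩, hx⟩
    have hp := hηpos x hx
    have hgr := aux_growth hη (c := c) (w := v) (t := η x / c)
      (fun ξ hξ => h ξ hξ v hvv) h1 (by positivity) (by simpa using h2)
    have hnot : x + (-(η x / c)) • v ∈ Ωᶜ := by
      intro hmem
      have := hηpos _ hmem
      have e : x + (-(η x / c)) • v + (η x / c) • v = x := by module
      rw [e, mul_div_cancel₀ _ hc.ne'] at hgr
      linarith
    refine (Metric.infDist_le_dist_of_mem hnot).trans ?_
    rw [dist_eq_norm]
    have e : x - (x + (-(η x / c)) • v) = (η x / c) • v := by module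
    rw [e, norm_smul, Real.norm_of_nonneg (by positivity)]
    apply le_of_eq; ring

/-- a function vanishing on the boundary, with bounded derivative, is `O(η)`. -/
lemma aux_bdry {Ω : Set E} {η : E → ℝ} (hΩo : IsOpen Ω) (hΩb : Bornology.IsBounded Ω)
    (hη : ContDiff ℝ 2 η) (hηpos : ∀ x ∈ Ω, 0 < η x) (hηbd : ∀ x ∈ frontier Ω, η x = 0)
    (hg : ∀ x ∈ frontier Ω, gradient η x ≠ 0)
    (h : E → ℝ) (h' : E → E →L[ℝ] ℝ) (hd : ∀ x ∈ closure Ω, HasFDerivAt h (h' x) x)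
    (hc : ContinuousOn h' (closure Ω)) (h0 : ∀ x ∈ frontier Ω, h x = 0) (hN : Ωᶜ.Nonempty) :
    ∃ K : ℝ, 0 ≤ K ∧ ∀ x ∈ Ω, |h x| ≤ K * η x := by
  obtain ⟨K, hK, hdist⟩ := aux_dist hΩo hΩb hη hηpos hηbd hg
  have hcomp : IsCompact (closure Ω) := hΩb.isCompact_closure
  obtain ⟨L, hL⟩ := hcomp.exists_bound_of_continuousOn hc
  refine ⟨|L| * K, by positivity, fun x hx => ?_⟩
  obtain ⟨y, hy, hxy⟩ := hΩo.isClosed_compl.exists_infDist_eq_dist hN x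
  have hball : Metric.ball x (dist x y) ⊆ Ω := by
    rw [← hxy]
    have := Metric.ball_infDist_compl_subset (s := Ω) (x := x)
    exact this
  have hd0 : dist x y ≠ 0 := by
    intro e; rw [dist_eq_zero] at e; subst e; exact hy hx
  have hcb : Metric.closedBall x (dist x y) ⊆ closure Ω := by
    rw [← closure_ball x hd0]; exact closure_mono hball
  have hyc : y ∈ Metric.closedBall x (dist x y) := by simp [dist_comm]
  have hyf : y ∈ frontier Ω := by rw [hΩo.frontier_eq]; exact ⟨hcb hyc, hy⟩
  have := Convex.norm_image_sub_le_of_norm_hasFDerivWithin_le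
    (f := h) (f' := h') (C := |L|) (s := Metric.closedBall x (dist x y)) (x := y) (y := x)
    (fun z hz => (hd z (hcb hz)).hasFDerivWithinAt)
    (fun z hz => (hL z (hcb hz)).trans (le_abs_self L)) (convex_closedBall _ _) hyc
    (Metric.mem_closedBall_self dist_nonneg)
  rw [h0 y hyf, sub_zero, Real.norm_eq_abs, ← dist_eq_norm, ← hxy] at this
  calc |h x| ≤ |L| * Metric.infDist x Ωᶜ := this
    _ ≤ |L| * (K * η x) := by gcongr; exact hdist x hx
    _ = _ := by ring
end geom

section func
variable {E : Type*} [NormedAddCommGroup E] [InnerProductSpace ℝ E] 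

lemma aux_sq_int {g : ℝ → ℝ} (hg : ContinuousOn g (Icc 0 1)) :
    (∫ s in (0:ℝ)..1, g s) ^ 2 ≤ ∫ s in (0:ℝ)..1, g s ^ 2 := by
  set c := ∫ s in (0:ℝ)..1, g s with hc
  have hg' : ContinuousOn g (uIcc 0 1) := by rwa [uIcc_of_le zero_le_one]
  have i1 : IntervalIntegrable g volume 0 1 := hg'.intervalIntegrable
  have i2 : IntervalIntegrable (fun s => g s ^ 2) volume 0 1 := (hg'.pow 2).intervalIntegrable
  have h0 : 0 ≤ ∫ s in (0:ℝ)..1, (g s - c) ^ 2 :=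
    intervalIntegral.integral_nonneg zero_le_one (fun s _ => sq_nonneg _)
  have e : ∫ s in (0:ℝ)..1, (g s - c) ^ 2
      = (∫ s in (0:ℝ)..1, g s ^ 2) - 2 * c * (∫ s in (0:ℝ)..1, g s) + c ^ 2 := by
    have : (fun s => (g s - c) ^ 2) = fun s => (g s ^ 2 - (2 * c) * g s) + c ^ 2 := by
      funext s; ring
    rw [this, intervalIntegral.integral_add (i2.sub (i1.const_mul _)) (by simp),
      intervalIntegral.integral_sub i2 (i1.const_mul _), intervalIntegral.integral_const_mul]
    simp
  rw [e, ← hc] at h0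
  nlinarith

lemma aux_pt {Ω : Set E} {u : E → ℝ} 
    (hu : ∀ x ∈ Ω, DifferentiableAt ℝ u x) (hu' : ContinuousOn (fderiv ℝ u) Ω) {x k : E}
    (hseg : ∀ s ∈ Icc (0:ℝ) 1, x + s • k ∈ Ω) :
    u x ^ 2 ≤ ‖k‖ ^ 2 * (∫ s in Icc (0:ℝ) 1, ‖fderiv ℝ u (x + s • k)‖ ^ 2)
      + 2 * (u x * u (x + k)) := by
  have hline : Continuous (fun s : ℝ => x + s • k) := by fun_prop
  have hcomp : ContinuousOn (fun s : ℝ => fderiv ℝ u (x + s • k)) (Icc 0 1) :=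
    hu'.comp hline.continuousOn hseg
  have hcomp1 : ContinuousOn (fun s : ℝ => fderiv ℝ u (x + s • k) k) (Icc 0 1) :=
    hcomp.clm_apply continuousOn_const
  have hder : ∀ s ∈ uIcc (0:ℝ) 1, HasDerivAt (fun s : ℝ => u (x + s • k))
      (fderiv ℝ u (x + s • k) k) s := by
    intro s hs
    rw [uIcc_of_le zero_le_one] at hs
    have h1 : HasDerivAt (fun s : ℝ => x + s • k) k s := by
      simpa using ((hasDerivAt_id s).smul_const k).const_add x
    exact (hu _ (hseg s hs)).hasFDerivAt.comp_hasDerivAt s h1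
  have hi : IntervalIntegrable (fun s : ℝ => fderiv ℝ u (x + s • k) k) volume 0 1 := by
    apply ContinuousOn.intervalIntegrable
    rwa [uIcc_of_le zero_le_one]
  have ftc := intervalIntegral.integral_eq_sub_of_hasDerivAt hder hi
  simp only [one_smul, zero_smul, add_zero] at ftc
  have h1 := aux_sq_int hcomp1
  rw [ftc] at h1
  have h2 : ∫ s in (0:ℝ)..1, (fderiv ℝ u (x + s • k) k) ^ 2 ≤
      ∫ s in (0:ℝ)..1, ‖k‖ ^ 2 * ‖fderiv ℝ u (x + s • k)‖ ^ 2 := by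
    apply intervalIntegral.integral_mono_on zero_le_one
    · apply ContinuousOn.intervalIntegrable
      rw [uIcc_of_le zero_le_one]; exact hcomp1.pow 2
    · apply ContinuousOn.intervalIntegrable
      rw [uIcc_of_le zero_le_one]; exact continuousOn_const.mul (hcomp.norm.pow 2)
    · intro s hs
      have := (fderiv ℝ u (x + s • k)).le_opNorm k
      rw [← mul_pow, ← sq_abs (fderiv ℝ u (x + s • k) k), ← Real.norm_eq_abs]
      rw [mul_comm] at this
      exact pow_le_pow_left₀ (norm_nonneg _) this 2
  rw [intervalIntegral.integral_const_mul, intervalIntegral.integral_of_le zero_le_one (f := fun s => ‖fderiv ℝ u (x + s • k)‖ ^ 2),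
    ← integral_Icc_eq_integral_Ioc] at h2
  nlinarith [sq_nonneg (u (x + k))]

variable [FiniteDimensional ℝ E] [MeasurableSpace E] [BorelSpace E]

lemma aux_meas_ind {Ω : Set E} (hΩ : MeasurableSet Ω) {f : E → ℝ} (hf : ContinuousOn f Ω) :
    Measurable (Ω.indicator (fun x => ENNReal.ofReal (f x))) := by
  classical
  have h : ContinuousOn (fun x => ENNReal.ofReal (f x)) Ω :=
    ENNReal.continuous_ofReal.comp_continuousOn hf
  have := ContinuousOn.measurable_piecewise h (continuousOn_const (c := (0:ENNReal)) (s := Ωᶜ)) hΩ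
  rw [← Set.piecewise_eq_indicator]
  exact this

lemma aux_func_local {Ω : Set E} (hΩ : MeasurableSet Ω) {P : Set E} (hP : MeasurableSet P)
    (hPΩ : P ⊆ Ω) {u : E → ℝ} (hu0 : ∀ x ∈ Ω, 0 ≤ u x)
    (hu : ∀ x ∈ Ω, DifferentiableAt ℝ u x) (hu' : ContinuousOn (fderiv ℝ u) Ω)
    {B : Set E} (hB : MeasurableSet B) {c : ℝ}
    (hBc : ∀ k ∈ B, ‖k‖ ≤ c)
    (hseg : ∀ x ∈ P, ∀ k ∈ B, ∀ s ∈ Icc (0:ℝ) 1, x + s • k ∈ Ω) :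
    volume B * ∫⁻ x in P, ENNReal.ofReal (u x ^ 2) ≤
      volume B * (ENNReal.ofReal (c ^ 2) * ∫⁻ x in Ω, ENNReal.ofReal (‖fderiv ℝ u x‖ ^ 2))
        + 2 * (∫⁻ x in Ω, ENNReal.ofReal (u x)) ^ 2 := by
  have huc : ContinuousOn u Ω := fun x hx => (hu x hx).continuousAt.continuousWithinAt
  set Gf : E → ENNReal := Ω.indicator (fun x => ENNReal.ofReal (‖fderiv ℝ u x‖ ^ 2)) with hGf
  set Uf : E → ENNReal := Ω.indicator (fun x => ENNReal.ofReal (u x)) with hUf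
  have mG : Measurable Gf := aux_meas_ind hΩ (hu'.norm.pow 2)
  have mU : Measurable Uf := aux_meas_ind hΩ huc
  rw [← lintegral_indicator hΩ, ← lintegral_indicator hΩ, ← hGf, ← hUf]
  have mG3 : Measurable (fun p : (E × E) × ℝ => Gf (p.1.1 + p.2 • p.1.2)) := by fun_prop
  have mG2 : Measurable (fun p : E × E => ∫⁻ s in Icc (0:ℝ) 1, Gf (p.1 + s • p.2)) :=
    mG3.lintegral_prod_right'
  have pt : ∀ x ∈ P, ∀ k ∈ B, ENNReal.ofReal (u x ^ 2) ≤
      ENNReal.ofReal (c ^ 2) * (∫⁻ s in Icc (0:ℝ) 1, Gf (x + s • k)) + 2 * (Uf x * Uf (x + k)) := by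
    intro x hx k hk
    have hs := hseg x hx k hk
    have h := aux_pt hu hu' hs
    have hxΩ := hPΩ hx
    have hxk : x + k ∈ Ω := by simpa using hs 1 (by simp)
    have hkc : ‖k‖ ^ 2 ≤ c ^ 2 := pow_le_pow_left₀ (norm_nonneg _) (hBc k hk) 2
    have hline : Continuous (fun s : ℝ => x + s • k) := by fun_prop
    have hcomp : ContinuousOn (fun s : ℝ => ‖fderiv ℝ u (x + s • k)‖ ^ 2) (Icc 0 1) :=
      (hu'.comp hline.continuousOn hs).norm.pow 2
    have hint : IntegrableOn (fun s : ℝ => ‖fderiv ℝ u (x + s • k)‖ ^ 2) (Icc 0 1) :=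
      hcomp.integrableOn_Icc
    have e1 : ∫⁻ s in Icc (0:ℝ) 1, Gf (x + s • k)
        = ENNReal.ofReal (∫ s in Icc (0:ℝ) 1, ‖fderiv ℝ u (x + s • k)‖ ^ 2) := by
      rw [ofReal_integral_eq_lintegral_ofReal hint (Filter.Eventually.of_forall fun s => sq_nonneg _)]
      apply setLIntegral_congr_fun measurableSet_Icc
      intro s hs'
      simp only [hGf]
      rw [indicator_of_mem (hs s hs')]
    have hI0 : 0 ≤ ∫ s in Icc (0:ℝ) 1, ‖fderiv ℝ u (x + s • k)‖ ^ 2 :=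
      integral_nonneg (fun s => sq_nonneg _)
    rw [e1, hUf, indicator_of_mem hxΩ, indicator_of_mem hxk, ← ENNReal.ofReal_mul (sq_nonneg c),
      ← ENNReal.ofReal_mul (hu0 x hxΩ)]
    have e2 : (2 : ENNReal) = ENNReal.ofReal 2 := by simp
    have hn : 0 ≤ u x * u (x + k) := mul_nonneg (hu0 _ hxΩ) (hu0 _ hxk)
    rw [e2, ← ENNReal.ofReal_mul (by norm_num), ← ENNReal.ofReal_add (by positivity) (by positivity)]
    apply ENNReal.ofReal_le_ofReal
    have := mul_le_mul_of_nonneg_right hkc hI0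
    linarith
  have step : ∫⁻ x in P, ∫⁻ k in B, ENNReal.ofReal (u x ^ 2) ≤
      ∫⁻ x in P, ∫⁻ k in B, (ENNReal.ofReal (c ^ 2) * (∫⁻ s in Icc (0:ℝ) 1, Gf (x + s • k))
        + 2 * (Uf x * Uf (x + k))) := by
    apply setLIntegral_mono' hP
    intro x hx
    apply setLIntegral_mono' hB
    intro k hk
    exact pt x hx k hk
  have eL : ∫⁻ x in P, ∫⁻ k in B, ENNReal.ofReal (u x ^ 2)
      = volume B * ∫⁻ x in P, ENNReal.ofReal (u x ^ 2) := by
    simp only [lintegral_const, Measure.restrict_apply_univ]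
    have : AEMeasurable (fun x => ENNReal.ofReal (u x ^ 2)) (volume.restrict P) :=
      (ENNReal.continuous_ofReal.comp_continuousOn ((huc.mono hPΩ).pow 2)).aemeasurable hP
    rw [lintegral_mul_const'' _ this, mul_comm]
  rw [eL] at step
  refine step.trans ?_
  have mA : Measurable (fun p : E × E => ENNReal.ofReal (c ^ 2) * (∫⁻ s in Icc (0:ℝ) 1, Gf (p.1 + s • p.2))) :=
    mG2.const_mul _
  have e1 : ∀ x, ∫⁻ k in B, (ENNReal.ofReal (c ^ 2) * (∫⁻ s in Icc (0:ℝ) 1, Gf (x + s • k))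
        + 2 * (Uf x * Uf (x + k))) =
      (∫⁻ k in B, ENNReal.ofReal (c ^ 2) * (∫⁻ s in Icc (0:ℝ) 1, Gf (x + s • k)))
      + ∫⁻ k in B, 2 * (Uf x * Uf (x + k)) := by
    intro x
    exact lintegral_add_left (mA.comp measurable_prodMk_left) _
  simp only [e1]
  rw [lintegral_add_left mA.lintegral_prod_right']
  apply add_le_add
  · calc ∫⁻ x in P, ∫⁻ k in B, ENNReal.ofReal (c ^ 2) * (∫⁻ s in Icc (0:ℝ) 1, Gf (x + s • k))
        ≤ ∫⁻ x, ∫⁻ k in B, ENNReal.ofReal (c ^ 2) * (∫⁻ s in Icc (0:ℝ) 1, Gf (x + s • k)) :=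
          setLIntegral_le_lintegral _ _
      _ = ∫⁻ k in B, ∫⁻ x, ENNReal.ofReal (c ^ 2) * (∫⁻ s in Icc (0:ℝ) 1, Gf (x + s • k)) :=
          lintegral_lintegral_swap mA.aemeasurable
      _ = ∫⁻ k in B, ENNReal.ofReal (c ^ 2) * ∫⁻ x, Gf x := by
          congr 1; funext k
          have mk : Measurable (fun x : E => ∫⁻ s in Icc (0:ℝ) 1, Gf (x + s • k)) :=
            mG2.comp measurable_prodMk_right
          rw [lintegral_const_mul _ mk]
          congr 1
          rw [lintegral_lintegral_swap]
          · simp only [lintegral_add_right_eq_self]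
            simp
          · exact (mG3.comp ((measurable_fst.prodMk measurable_const).prodMk measurable_snd)).aemeasurable
      _ = volume B * (ENNReal.ofReal (c ^ 2) * ∫⁻ x, Gf x) := by
          simp [mul_comm]
  · calc ∫⁻ x in P, ∫⁻ k in B, 2 * (Uf x * Uf (x + k))
        ≤ ∫⁻ x, ∫⁻ k, 2 * (Uf x * Uf (x + k)) :=
          (setLIntegral_le_lintegral _ _).trans
            (lintegral_mono fun x => setLIntegral_le_lintegral _ _)
      _ = 2 * (∫⁻ x, Uf x) ^ 2 := by
          have : ∀ x, ∫⁻ k, 2 * (Uf x * Uf (x + k)) = 2 * (Uf x * ∫⁻ k, Uf k) := by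
            intro x
            rw [lintegral_const_mul _ (by fun_prop), lintegral_const_mul _ (by fun_prop),
              lintegral_add_left_eq_self]
          simp only [this]
          rw [lintegral_const_mul _ (by fun_prop), lintegral_mul_const _ mU, sq]

lemma aux_func [Nontrivial E] {Ω : Set E} {η : E → ℝ} (hΩo : IsOpen Ω) (hΩb : Bornology.IsBounded Ω)
    (hη : ContDiff ℝ 2 η) (hηpos : ∀ x ∈ Ω, 0 < η x) (hηbd : ∀ x ∈ frontier Ω, η x = 0)
    (hg : ∀ x ∈ frontier Ω, gradient η x ≠ 0) :
    ∃ c > (0:ℝ), ∃ b > (0:ℝ), ∃ r₀ > (0:ℝ), ∀ r, 0 < r → r ≤ r₀ →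
      ∀ u : E → ℝ, (∀ x ∈ Ω, 0 ≤ u x) →
      (∀ x ∈ Ω, DifferentiableAt ℝ u x) → ContinuousOn (fderiv ℝ u) Ω →
      ∫⁻ x in Ω, ENNReal.ofReal (u x ^ 2) ≤
        ENNReal.ofReal (c * r ^ 2) * (∫⁻ x in Ω, ENNReal.ofReal (‖fderiv ℝ u x‖ ^ 2))
        + ENNReal.ofReal (b * (r ^ Module.finrank ℝ E)⁻¹) * (∫⁻ x in Ω, ENNReal.ofReal (u x)) ^ 2 := by
  have hcomp : IsCompact (closure Ω) := hΩb.isCompact_closure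
  have := hcomp.induction_on
    (p := fun S => ∃ c > (0:ℝ), ∃ b > (0:ℝ), ∃ r₀ > (0:ℝ), ∀ r, 0 < r → r ≤ r₀ →
      ∀ u : E → ℝ, (∀ x ∈ Ω, 0 ≤ u x) →
      (∀ x ∈ Ω, DifferentiableAt ℝ u x) → ContinuousOn (fderiv ℝ u) Ω →
      ∫⁻ x in Ω ∩ S, ENNReal.ofReal (u x ^ 2) ≤
        ENNReal.ofReal (c * r ^ 2) * (∫⁻ x in Ω, ENNReal.ofReal (‖fderiv ℝ u x‖ ^ 2))
        + ENNReal.ofReal (b * (r ^ Module.finrank ℝ E)⁻¹) * (∫⁻ x in Ω, ENNReal.ofReal (u x)) ^ 2)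
    ⟨1, one_pos, 1, one_pos, 1, one_pos, by intros; simp⟩
    (fun s t hst ⟨c, hc, b, hb, r₀, hr₀, h⟩ => ⟨c, hc, b, hb, r₀, hr₀, fun r hr hr' u h1 h2 h3 =>
      (lintegral_mono_set (inter_subset_inter_right _ hst)).trans (h r hr hr' u h1 h2 h3)⟩)
    (fun s t ⟨c, hc, b, hb, r₀, hr₀, h⟩ ⟨c', hc', b', hb', r₀', hr₀', h'⟩ =>
      ⟨c + c', by positivity, b + b', by positivity, min r₀ r₀', lt_min hr₀ hr₀',
        fun r hr hr' u h1 h2 h3 => by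
          rw [inter_union_distrib_left]
          refine (lintegral_union_le _ _ _).trans ?_
          refine (add_le_add (h r hr (hr'.trans (min_le_left _ _)) u h1 h2 h3)
            (h' r hr (hr'.trans (min_le_right _ _)) u h1 h2 h3)).trans ?_
          rw [add_mul, add_mul, ENNReal.ofReal_add (by positivity) (by positivity),
            ENNReal.ofReal_add (by positivity) (by positivity)]
          apply le_of_eq; ring⟩) ?_
  · obtain ⟨c, hc, b, hb, r₀, hr₀, h⟩ := this
    rw [inter_eq_left.mpr subset_closure] at h
    exact ⟨c, hc, b, hb, r₀, hr₀, h⟩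
  intro y hy
  obtain ⟨ρ, hρ, v, δ, hδ, r₀, hr₀, h⟩ := aux_cone hΩo hη hηpos hηbd hg hy
  set V1 := (volume (Metric.ball (0:E) 1)).toReal with hV1
  have hV1fin : volume (Metric.ball (0:E) 1) ≠ ⊤ := measure_ball_lt_top.ne
  have hV1p : 0 < V1 := ENNReal.toReal_pos (Metric.measure_ball_pos volume _ one_pos).ne' hV1fin
  refine ⟨Metric.ball y ρ, mem_nhdsWithin_of_mem_nhds (Metric.ball_mem_nhds y hρ),
    (‖v‖ + δ) ^ 2, by positivity, 2 * (δ ^ Module.finrank ℝ E * V1)⁻¹, by positivity, r₀, hr₀, ?_⟩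
  intro r hr hr' u h1 h2 h3
  have hvol : volume (Metric.ball (r • v) (r * δ))
      = ENNReal.ofReal ((r * δ) ^ Module.finrank ℝ E * V1) := by
    rw [Measure.addHaar_ball _ _ (by positivity), ENNReal.ofReal_mul (by positivity), hV1,
      ENNReal.ofReal_toReal hV1fin]
  have key := aux_func_local hΩo.measurableSet (P := Ω ∩ Metric.ball y ρ)
    (hΩo.measurableSet.inter measurableSet_ball) inter_subset_left h1 h2 h3
    (B := Metric.ball (r • v) (r * δ)) measurableSet_ball (c := r * (‖v‖ + δ))
    (fun k hk => by
      rw [Metric.mem_ball, dist_eq_norm] at hk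
      have := norm_add_le (k - r • v) (r • v)
      rw [sub_add_cancel, norm_smul r v, Real.norm_of_nonneg hr.le] at this
      nlinarith)
    (fun x hx k hk s hs => h x hx r hr hr' k hk s hs)
  rw [hvol] at key
  set β := (r * δ) ^ Module.finrank ℝ E * V1 with hβ
  have hβp : 0 < β := by positivity
  have hβ0 : ENNReal.ofReal β ≠ 0 := by simpa using hβp
  have e3 : ENNReal.ofReal (2 * (δ ^ Module.finrank ℝ E * V1)⁻¹ * (r ^ Module.finrank ℝ E)⁻¹)
      = (ENNReal.ofReal β)⁻¹ * 2 := by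
    rw [← ENNReal.ofReal_inv_of_pos hβp]
    have e2 : (2 : ENNReal) = ENNReal.ofReal 2 := by simp
    rw [e2, ← ENNReal.ofReal_mul (by positivity)]
    congr 1
    rw [hβ, mul_pow]
    simp only [mul_inv]
    ring
  have e4 : (‖v‖ + δ) ^ 2 * r ^ 2 = (r * (‖v‖ + δ)) ^ 2 := by ring
  rw [e3, e4]
  have := mul_le_mul_right key (ENNReal.ofReal β)⁻¹
  rw [mul_add, ← mul_assoc, ← mul_assoc (ENNReal.ofReal β)⁻¹ (ENNReal.ofReal β), 
    ENNReal.inv_mul_cancel hβ0 ENNReal.ofReal_ne_top, one_mul, one_mul, ← mul_assoc] at this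
  simpa only [mul_assoc] using this
end func

section divergence
variable {E : Type*} [NormedAddCommGroup E] [InnerProductSpace ℝ E]
  [FiniteDimensional ℝ E] [MeasurableSpace E] [BorelSpace E]

lemma aux_integral_deriv_zero {g : E → ℝ} {g' : E → E →L[ℝ] ℝ} (e : E)
    (hg : ∀ x, HasFDerivAt g (g' x) x) (i1 : Integrable g) (i2 : Integrable (fun x => g' x e)) :
    ∫ x, g' x e = 0 := by
  have := integral_bilinear_hasLineDerivAt_right_eq_neg_left_of_integrable (μ := (volume : Measure E))
    (f := fun _ : E => (1:ℝ)) (f' := fun _ : E => (0:ℝ)) (g := g) (g' := fun x => g' x e) (v := e)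
    (B := ContinuousLinearMap.mul ℝ ℝ) (by simp) (by simpa using i2) (by simpa using i1)
    (fun x _ => by simpa using (hasFDerivAt_const (1:ℝ) x).hasLineDerivAt e)
    (fun x _ => (hg x).hasLineDerivAt e)
  simpa using this

noncomputable def auxPhi (n : ℕ) (s : ℝ) : ℝ := 1 - (1 + n * s ^ 2)⁻¹
noncomputable def auxPhi' (n : ℕ) (s : ℝ) : ℝ := 2 * n * s / (1 + n * s ^ 2) ^ 2

lemma auxPhi_pos (n : ℕ) (s : ℝ) : 0 < 1 + n * s ^ 2 := by positivity

lemma auxPhi_hasDeriv (n : ℕ) (s : ℝ) : HasDerivAt (auxPhi n) (auxPhi' n s) s := by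
  have h1 : HasDerivAt (fun s : ℝ => 1 + n * s ^ 2) (n * (2 * s)) s := by
    simpa using ((hasDerivAt_pow 2 s).const_mul (n:ℝ)).const_add 1
  have h2 : HasDerivAt (auxPhi n) _ s := (h1.inv (auxPhi_pos n s).ne').const_sub 1
  refine h2.congr_deriv ?_
  unfold auxPhi'; ring

lemma auxPhi_cont' (n : ℕ) : Continuous (auxPhi' n) := by
  unfold auxPhi'
  apply Continuous.div (by fun_prop) (by fun_prop)
  intro s; exact (pow_pos (auxPhi_pos n s) 2).ne'

lemma auxPhi_cont (n : ℕ) : Continuous (auxPhi n) :=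
  continuous_iff_continuousAt.mpr fun s => (auxPhi_hasDeriv n s).continuousAt

lemma auxPhi_nonneg (n : ℕ) (s : ℝ) : 0 ≤ auxPhi n s := by
  unfold auxPhi
  have h0 : 0 ≤ (n:ℝ) * s^2 := by positivity
  have : (1 + n * s ^ 2)⁻¹ ≤ 1 := inv_le_one_of_one_le₀ (by linarith)
  linarith

lemma auxPhi_le_one (n : ℕ) (s : ℝ) : auxPhi n s ≤ 1 := by
  unfold auxPhi
  have := inv_pos.mpr (auxPhi_pos n s)
  linarith

lemma auxPhi_le (n : ℕ) (s : ℝ) : auxPhi n s ≤ n * s ^ 2 := by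
  unfold auxPhi
  have h := auxPhi_pos n s
  have h0 : 0 ≤ (n:ℝ) * s^2 := by positivity
  have : 1 - n * s ^ 2 ≤ (1 + n * s ^ 2)⁻¹ := by
    rw [← one_div, le_div_iff₀ h]; nlinarith
  linarith

lemma auxPhi'_mul_le (n : ℕ) {s : ℝ} : auxPhi' n s * s ≤ 1 := by
  unfold auxPhi'
  have h := auxPhi_pos n s
  rw [div_mul_eq_mul_div, div_le_one (by positivity)]
  have h0 : 0 ≤ (n:ℝ) * s^2 := by positivity
  nlinarith

lemma auxPhi'_nonneg (n : ℕ) {s : ℝ} (hs : 0 ≤ s) : 0 ≤ auxPhi' n s := by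
  unfold auxPhi'
  have h := auxPhi_pos n s
  positivity

lemma aux_tendsto_inv {s : ℝ} (hs : 0 < s) :
    Filter.Tendsto (fun n : ℕ => (1 + (n:ℝ) * s ^ 2)⁻¹) Filter.atTop (nhds 0) := by
  apply Filter.Tendsto.inv_tendsto_atTop
  apply Filter.tendsto_atTop_add_const_left
  exact tendsto_natCast_atTop_atTop.atTop_mul_const (by positivity)

lemma auxPhi_tendsto {s : ℝ} (hs : 0 < s) :
    Filter.Tendsto (fun n : ℕ => auxPhi n s) Filter.atTop (nhds 1) := by
  simpa [auxPhi] using (aux_tendsto_inv hs).const_sub 1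

lemma auxPhi'_tendsto {s : ℝ} (hs : 0 < s) :
    Filter.Tendsto (fun n : ℕ => auxPhi' n s) Filter.atTop (nhds 0) := by
  have h := aux_tendsto_inv hs
  have : (fun n : ℕ => auxPhi' n s) = fun n : ℕ =>
      (2 / s) * ((1 + (n:ℝ) * s ^ 2)⁻¹ - (1 + (n:ℝ) * s ^ 2)⁻¹ * (1 + (n:ℝ) * s ^ 2)⁻¹) := by
    funext n
    have h := auxPhi_pos n s
    unfold auxPhi'
    field_simp
    ring
  rw [this]
  simpa using (h.sub (h.mul h)).const_mul (2 / s)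

lemma aux_cutoff_hasFDeriv {Ω : Set E} {η : E → ℝ} (hΩo : IsOpen Ω) (hΩb : Bornology.IsBounded Ω)
    (hη : ContDiff ℝ 2 η) (hηbd : ∀ x ∈ frontier Ω, η x = 0)
    {V : E → ℝ} {V' : E → E →L[ℝ] ℝ} (hV : ∀ x ∈ Ω, HasFDerivAt V (V' x) x)
    (hVc : ContinuousOn V (closure Ω)) (n : ℕ) (x : E) :
    HasFDerivAt (Ω.indicator fun z => auxPhi n (η z) * V z)
      (Ω.indicator (fun z => auxPhi n (η z) • V' z + V z • (auxPhi' n (η z) • fderiv ℝ η z)) x) x := by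
  have hd : Differentiable ℝ η := hη.differentiable (by norm_num)
  by_cases hx : x ∈ Ω
  · rw [indicator_of_mem hx]
    have h1 : HasFDerivAt (fun z => auxPhi n (η z)) (auxPhi' n (η x) • fderiv ℝ η x) x :=
      (auxPhi_hasDeriv n (η x)).comp_hasFDerivAt x (hd x).hasFDerivAt
    refine (h1.mul (hV x hx)).congr_of_eventuallyEq ?_
    filter_upwards [hΩo.mem_nhds hx] with z hz
    rw [indicator_of_mem hz]; rfl
  · rw [indicator_of_notMem hx]
    by_cases hxc : x ∈ closure Ω
    · have hxf : x ∈ frontier Ω := by rw [hΩo.frontier_eq]; exact ⟨hxc, hx⟩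
      obtain ⟨M, hM⟩ := hΩb.isCompact_closure.exists_bound_of_continuousOn hVc
      rw [hasFDerivAt_iff_isLittleO]
      simp only [indicator_of_notMem hx, _root_.zero_apply, sub_zero]
      have hO : (fun z => η z) =O[nhds x] fun z => z - x := by
        have := (hd x).hasFDerivAt.isBigO_sub
        simpa [hηbd x hxf] using this
      have h1 : (fun z => η z) =o[nhds x] fun _ => (1:ℝ) := by
        rw [Asymptotics.isLittleO_one_iff]
        have := hη.continuous.tendsto x
        rwa [hηbd x hxf] at this
      have h2 : (fun z => η z * η z) =o[nhds x] fun z => z - x := by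
        have := h1.mul_isBigO hO.norm_right
        simp only [one_mul] at this
        exact this.of_norm_right
      have h3 : (Ω.indicator fun z => auxPhi n (η z) * V z) =O[nhds x] fun z => η z * η z := by
        apply Asymptotics.IsBigO.of_bound (n * |M|)
        refine Filter.Eventually.of_forall fun z => ?_
        by_cases hz : z ∈ Ω
        · rw [indicator_of_mem hz, norm_mul, Real.norm_of_nonneg (auxPhi_nonneg _ _)]
          have a1 := auxPhi_le n (η z)
          have a2 := (hM z (subset_closure hz)).trans (le_abs_self M)
          rw [norm_mul, Real.norm_eq_abs (η z), abs_mul_abs_self]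
          calc auxPhi n (η z) * ‖V z‖ ≤ (n * η z ^ 2) * |M| := by gcongr
            _ = _ := by ring
        · rw [indicator_of_notMem hz, norm_zero]; positivity
      exact h3.trans_isLittleO h2
    · refine (hasFDerivAt_const (0:ℝ) x).congr_of_eventuallyEq ?_
      filter_upwards [isClosed_closure.isOpen_compl.mem_nhds hxc] with z hz
      rw [indicator_of_notMem]
      exact fun h => hz (subset_closure h)

lemma aux_div_s5 {ι : Type*} [Fintype ι] (e : ι → E)
    {Ω : Set E} {η : E → ℝ} (hΩo : IsOpen Ω) (hΩb : Bornology.IsBounded Ω)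
    (hη : ContDiff ℝ 2 η) (hηpos : ∀ x ∈ Ω, 0 < η x) (hηbd : ∀ x ∈ frontier Ω, η x = 0)
    {V : ι → E → ℝ} {V' : ι → E → E →L[ℝ] ℝ} (hV : ∀ i, ∀ x ∈ Ω, HasFDerivAt (V i) (V' i x) x)
    (hVc : ∀ i, ContinuousOn (V i) (closure Ω)) (hVc' : ∀ i, ContinuousOn (V' i) (closure Ω))
    {K : ℝ} (hK : ∀ x ∈ Ω, |∑ i, V i x * fderiv ℝ η x (e i)| ≤ K * η x) :
    ∫ x in Ω, ∑ i, V' i x (e i) = 0 := by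
  have hηc : Continuous (fderiv ℝ η) := hη.continuous_fderiv (by norm_num)
  have hcomp : IsCompact (closure Ω) := hΩb.isCompact_closure
  have toInt : ∀ {f : E → ℝ}, ContinuousOn f (closure Ω) → IntegrableOn f Ω := fun hf =>
    (hf.integrableOn_compact hcomp).mono_set subset_closure
  have cφ : ∀ n, Continuous fun z => auxPhi n (η z) := fun n => (auxPhi_cont n).comp hη.continuous
  have cφ' : ∀ n, Continuous fun z => auxPhi' n (η z) := fun n => (auxPhi_cont' n).comp hη.continuous
  have cD : ∀ n i, ContinuousOn (fun z => auxPhi n (η z) * V' i z (e i)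
      + V i z * (auxPhi' n (η z) * fderiv ℝ η z (e i))) (closure Ω) := fun n i =>
    ((cφ n).continuousOn.mul ((hVc' i).clm_apply continuousOn_const)).add
      ((hVc i).mul ((cφ' n).continuousOn.mul (hηc.continuousOn.clm_apply continuousOn_const)))
  have z : ∀ n i, ∫ x in Ω, (auxPhi n (η x) * V' i x (e i)
      + V i x * (auxPhi' n (η x) * fderiv ℝ η x (e i))) = 0 := by
    intro n i
    have eq : ∀ x, (Ω.indicator (fun z => auxPhi n (η z) • V' i z
        + V i z • (auxPhi' n (η z) • fderiv ℝ η z)) x) (e i) =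
        Ω.indicator (fun x => auxPhi n (η x) * V' i x (e i)
          + V i x * (auxPhi' n (η x) * fderiv ℝ η x (e i))) x := by
      intro x
      by_cases hx : x ∈ Ω
      · simp [indicator_of_mem hx]
      · simp [indicator_of_notMem hx]
    have := aux_integral_deriv_zero (e i)
      (aux_cutoff_hasFDeriv hΩo hΩb hη hηbd (hV i) (hVc i) n)
      ((integrable_indicator_iff hΩo.measurableSet).mpr
        (toInt ((cφ n).continuousOn.mul (hVc i))))
      (by
        simp only [eq]
        exact (integrable_indicator_iff hΩo.measurableSet).mpr (toInt (cD n i)))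
    simp only [eq] at this
    rwa [integral_indicator hΩo.measurableSet] at this
  have z2 : ∀ n, ∫ x in Ω, (∑ i, (auxPhi n (η x) * V' i x (e i)
      + V i x * (auxPhi' n (η x) * fderiv ℝ η x (e i)))) = 0 := by
    intro n
    rw [integral_finsetSum _ (fun i _ => toInt (cD n i))]
    exact Finset.sum_eq_zero fun i _ => z n i
  have cdiv : ContinuousOn (fun x => ∑ i, V' i x (e i)) (closure Ω) :=
    continuousOn_finsetSum _ fun i _ => (hVc' i).clm_apply continuousOn_const
  have rew : ∀ n x, (∑ i, (auxPhi n (η x) * V' i x (e i)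
      + V i x * (auxPhi' n (η x) * fderiv ℝ η x (e i)))) =
      auxPhi n (η x) * (∑ i, V' i x (e i)) + auxPhi' n (η x) * ∑ i, V i x * fderiv ℝ η x (e i) := by
    intro n x
    rw [Finset.sum_add_distrib, Finset.mul_sum, Finset.mul_sum]
    congr 1
    exact Finset.sum_congr rfl fun i _ => by ring
  have lim : Filter.Tendsto (fun n : ℕ => ∫ x in Ω, (∑ i, (auxPhi n (η x) * V' i x (e i)
      + V i x * (auxPhi' n (η x) * fderiv ℝ η x (e i))))) Filter.atTop
      (nhds (∫ x in Ω, ∑ i, V' i x (e i))) := by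
    have hfin : volume Ω ≠ ⊤ := hΩb.measure_lt_top.ne
    apply tendsto_integral_of_dominated_convergence (fun x => |∑ i, V' i x (e i)| + |K|)
    · intro n
      exact (toInt (continuousOn_finsetSum _ fun i _ => cD n i)).aestronglyMeasurable
    · exact (toInt cdiv).abs.add (integrableOn_const hfin)
    · intro n
      refine (ae_restrict_iff' hΩo.measurableSet).mpr (Filter.Eventually.of_forall fun x hx => ?_)
      rw [rew, Real.norm_eq_abs]
      refine (abs_add_le _ _).trans (add_le_add ?_ ?_)
      · rw [abs_mul, abs_of_nonneg (auxPhi_nonneg _ _)]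
        exact mul_le_of_le_one_left (abs_nonneg _) (auxPhi_le_one _ _)
      · have hp := (hηpos x hx).le
        have hp' := auxPhi'_nonneg n hp
        rw [abs_mul, abs_of_nonneg hp']
        calc auxPhi' n (η x) * |∑ i, V i x * fderiv ℝ η x (e i)|
            ≤ auxPhi' n (η x) * (|K| * η x) := by
              gcongr
              exact (hK x hx).trans (by gcongr; exact le_abs_self K)
          _ = |K| * (auxPhi' n (η x) * η x) := by ring
          _ ≤ |K| * 1 := by gcongr; exact auxPhi'_mul_le n
          _ = |K| := mul_one _
    · refine (ae_restrict_iff' hΩo.measurableSet).mpr (Filter.Eventually.of_forall fun x hx => ?_)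
      simp only [rew]
      have := ((auxPhi_tendsto (hηpos x hx)).mul_const (∑ i, V' i x (e i))).add
        ((auxPhi'_tendsto (hηpos x hx)).mul_const (∑ i, V i x * fderiv ℝ η x (e i)))
      simpa using this
  simp only [z2] at lim
  exact (tendsto_nhds_unique lim tendsto_const_nhds)

end divergence

section ibp
variable {N : ℕ}

lemma aux_inner_grad (f g : EuclideanSpace ℝ (Fin N) → ℝ) (x : EuclideanSpace ℝ (Fin N)) :
    ⟪gradient f x, gradient g x⟫ = ∑ i : Fin N, fderiv ℝ f x (EuclideanSpace.single i 1)
      * fderiv ℝ g x (EuclideanSpace.single i 1) := by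
  have h : ∀ (f : EuclideanSpace ℝ (Fin N) → ℝ) i, fderiv ℝ f x (EuclideanSpace.single i 1)
      = gradient f x i := by
    intro f i
    have : fderiv ℝ f x (EuclideanSpace.single i 1)
        = ⟪gradient f x, EuclideanSpace.single i (1:ℝ)⟫ := by
      rw [gradient, InnerProductSpace.toDual_symm_apply]
    rw [this, EuclideanSpace.inner_single_right]
    simp
  simp only [h, PiLp.inner_apply]
  exact Finset.sum_congr rfl fun i _ => by simp [mul_comm]

lemma aux_norm_fderiv (f : EuclideanSpace ℝ (Fin N) → ℝ) (x : EuclideanSpace ℝ (Fin N)) :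
    ‖fderiv ℝ f x‖ ^ 2 = ∑ i : Fin N, fderiv ℝ f x (EuclideanSpace.single i 1)
      * fderiv ℝ f x (EuclideanSpace.single i 1) := by
  rw [← aux_inner_grad, real_inner_self_eq_norm_sq, gradient, LinearIsometryEquiv.norm_map]

lemma aux_hasFDerivAt_apply {f : EuclideanSpace ℝ (Fin N) → ℝ} {x : EuclideanSpace ℝ (Fin N)}
    (h : DifferentiableAt ℝ (fderiv ℝ f) x) (e : EuclideanSpace ℝ (Fin N)) :
    HasFDerivAt (fun y => fderiv ℝ f y e)
      ((ContinuousLinearMap.apply ℝ ℝ e).comp (fderiv ℝ (fderiv ℝ f) x)) x :=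
  (ContinuousLinearMap.apply ℝ ℝ e).hasFDerivAt.comp x h.hasFDerivAt

lemma aux_lap_eq {f : EuclideanSpace ℝ (Fin N) → ℝ} {x : EuclideanSpace ℝ (Fin N)}
    (h : DifferentiableAt ℝ (fderiv ℝ f) x) :
    spaceLaplacian f x = ∑ i : Fin N, fderiv ℝ (fderiv ℝ f) x (EuclideanSpace.single i 1)
      (EuclideanSpace.single i 1) := by
  unfold spaceLaplacian
  refine Finset.sum_congr rfl fun i _ => ?_
  rw [(aux_hasFDerivAt_apply h _).fderiv]
  simp

lemma aux_ibp {Ω : Set (EuclideanSpace ℝ (Fin N))} {η : EuclideanSpace ℝ (Fin N) → ℝ}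
    (hΩo : IsOpen Ω) (hΩb : Bornology.IsBounded Ω)
    (hη : ContDiff ℝ 2 η) (hηpos : ∀ x ∈ Ω, 0 < η x) (hηbd : ∀ x ∈ frontier Ω, η x = 0)
    (hg : ∀ x ∈ frontier Ω, gradient η x ≠ 0) (hN : Ωᶜ.Nonempty)
    {f : EuclideanSpace ℝ (Fin N) → ℝ}
    (hf2 : ∀ x ∈ closure Ω, DifferentiableAt ℝ (fderiv ℝ f) x)
    (hf2c : ContinuousOn (fderiv ℝ (fderiv ℝ f)) (closure Ω))
    (hneu : ∀ x ∈ frontier Ω, ⟪gradient f x, gradient η x⟫ = 0)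
    {w : EuclideanSpace ℝ (Fin N) → ℝ}
    {w' : EuclideanSpace ℝ (Fin N) → EuclideanSpace ℝ (Fin N) →L[ℝ] ℝ}
    (hw : ∀ x ∈ Ω, HasFDerivAt w (w' x) x) (hwc : ContinuousOn w (closure Ω))
    (hwc' : ContinuousOn w' (closure Ω)) :
    ∫ x in Ω, (w x * spaceLaplacian f x
      + ∑ i : Fin N, fderiv ℝ f x (EuclideanSpace.single i 1) * w' x (EuclideanSpace.single i 1)) = 0 := by
  have hcomp : IsCompact (closure Ω) := hΩb.isCompact_closure
  set e : Fin N → EuclideanSpace ℝ (Fin N) := fun i => EuclideanSpace.single i 1 with he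
  have hfc : ContinuousOn (fderiv ℝ f) (closure Ω) := fun x hx =>
    (hf2 x hx).continuousAt.continuousWithinAt
  have hηc : Continuous (fderiv ℝ η) := hη.continuous_fderiv (by norm_num)
  have hη1 : ContDiff ℝ 1 (fderiv ℝ η) := hη.fderiv_right (by norm_num)
  have hη2 : ∀ x, DifferentiableAt ℝ (fderiv ℝ η) x := fun x =>
    (hη1.differentiable (by norm_num)) x
  have hη2c : Continuous (fderiv ℝ (fderiv ℝ η)) := hη1.continuous_fderiv (by norm_num)
  have cc : ∀ {f'' : EuclideanSpace ℝ (Fin N) → (EuclideanSpace ℝ (Fin N)) →L[ℝ] (EuclideanSpace ℝ (Fin N)) →L[ℝ] ℝ} (i : Fin N),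
      ContinuousOn f'' (closure Ω) →
      ContinuousOn (fun x => (ContinuousLinearMap.apply ℝ ℝ (e i)).comp (f'' x)) (closure Ω) := by
    intro f'' i h
    exact continuousOn_const.clm_comp h
  obtain ⟨K, hK0, hK⟩ := aux_bdry hΩo hΩb hη hηpos hηbd hg
    (fun x => ∑ i, fderiv ℝ f x (e i) * fderiv ℝ η x (e i))
    (fun x => ∑ i, (fderiv ℝ f x (e i) • (ContinuousLinearMap.apply ℝ ℝ (e i)).comp (fderiv ℝ (fderiv ℝ η) x)
      + fderiv ℝ η x (e i) • (ContinuousLinearMap.apply ℝ ℝ (e i)).comp (fderiv ℝ (fderiv ℝ f) x)))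
    (fun x hx => HasFDerivAt.fun_sum fun i _ =>
      (aux_hasFDerivAt_apply (hf2 x hx) (e i)).mul (aux_hasFDerivAt_apply (hη2 x) (e i)))
    (continuousOn_finsetSum _ fun i _ =>
      ((hfc.clm_apply continuousOn_const).smul (cc i hη2c.continuousOn)).add
      ((hηc.continuousOn.clm_apply continuousOn_const).smul (cc i hf2c)))
    (fun x hx => by rw [← hneu x hx, aux_inner_grad]) hN
  obtain ⟨W, hW⟩ := hcomp.exists_bound_of_continuousOn hwc
  have := aux_div_s5 e hΩo hΩb hη hηpos hηbd (V := fun i x => w x * fderiv ℝ f x (e i))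
    (V' := fun i x => w x • (ContinuousLinearMap.apply ℝ ℝ (e i)).comp (fderiv ℝ (fderiv ℝ f) x)
      + fderiv ℝ f x (e i) • w' x)
    (fun i x hx => (hw x hx).mul (aux_hasFDerivAt_apply (hf2 x (subset_closure hx)) (e i)))
    (fun i => hwc.mul (hfc.clm_apply continuousOn_const))
    (fun i => (hwc.smul (cc i hf2c)).add ((hfc.clm_apply continuousOn_const).smul hwc'))
    (K := |W| * K) (fun x hx => by
      have : ∑ i, w x * fderiv ℝ f x (e i) * fderiv ℝ η x (e i)
          = w x * ∑ i, fderiv ℝ f x (e i) * fderiv ℝ η x (e i) := by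
        rw [Finset.mul_sum]; exact Finset.sum_congr rfl fun i _ => by ring
      rw [this, abs_mul, mul_assoc]
      have h1 := (hW x (subset_closure hx)).trans (le_abs_self W)
      rw [Real.norm_eq_abs] at h1
      exact mul_le_mul h1 (hK x hx) (abs_nonneg _) (abs_nonneg _))
  rw [← this]
  refine setIntegral_congr_fun hΩo.measurableSet fun x hx => ?_
  simp only
  rw [aux_lap_eq (hf2 x (subset_closure hx)), Finset.mul_sum, ← Finset.sum_add_distrib]
  refine Finset.sum_congr rfl fun i _ => ?_
  simp [he]
end ibp

section ode

lemma aux_ode {N : ℕ} {t₁ A c b : ℝ} (ht₁ : 0 < t₁) (hA : 0 ≤ A) (hc : 0 < c) (hb : 0 < b)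
    {F F' G G' D : ℝ → ℝ} (hF0 : ∀ t ∈ Icc 0 t₁, 0 ≤ F t)
    (hFc : ContinuousOn F (Icc 0 t₁)) (hGc : ContinuousOn G (Icc 0 t₁))
    (hF : ∀ t ∈ Ioo 0 t₁, HasDerivAt F (F' t) t) (hG : ∀ t ∈ Ioo 0 t₁, HasDerivAt G (G' t) t)
    (hF' : ∀ t ∈ Ioo 0 t₁, -(A * F t) ≤ F' t)
    (hG' : ∀ t ∈ Ioo 0 t₁, 2 * D t - 2 * A * G t ≤ G' t)
    (hfun : ∀ σ > 0, ∀ t ∈ Ioo 0 t₁, G t ≤ c * σ * D t + b * (1 + (σ ^ N)⁻¹) * F t ^ 2) :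
    G 0 ≤ exp (4 * A * t₁) * ((N + 1) * b * (1 + ((2 / (c * (N + 1)) * t₁) ^ N)⁻¹)) * F t₁ ^ 2 := by
  set κ := 2 / (c * (N + 1)) with hκ
  have hκp : 0 < κ := by positivity
  set m := exp (A * t₁) * F t₁ with hm
  -- bound on F
  have hFm : ∀ t ∈ Icc 0 t₁, F t ≤ m := by
    have hmono : MonotoneOn (fun t => exp (A * t) * F t) (Icc 0 t₁) := by
      have hd : ∀ t ∈ Ioo 0 t₁, HasDerivAt (fun t => exp (A * t) * F t)
          (exp (A * t) * A * F t + exp (A * t) * F' t) t := by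
        intro t ht
        have h1 : HasDerivAt (fun t => exp (A * t)) (exp (A * t) * A) t := by
          simpa using ((hasDerivAt_id t).const_mul A).exp
        exact h1.mul (hF t ht)
      apply monotoneOn_of_deriv_nonneg (convex_Icc _ _)
      · exact ContinuousOn.mul (by fun_prop) hFc
      · rw [interior_Icc]
        exact fun t ht => (hd t ht).differentiableAt.differentiableWithinAt
      · rw [interior_Icc]
        intro t ht
        rw [(hd t ht).deriv]
        have := hF' t ht
        have he := exp_pos (A * t)
        nlinarith
    intro t ht
    have h1 := hmono ht (right_mem_Icc.mpr ht₁.le) ht.2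
    simp only at h1
    have h2 : 1 ≤ exp (A * t) := one_le_exp (mul_nonneg hA ht.1)
    have h3 := hF0 t ht
    rw [hm]
    nlinarith
  have hm0 : 0 ≤ m := mul_nonneg (exp_pos _).le (hF0 t₁ (right_mem_Icc.mpr ht₁.le))
  set Q := exp (2 * A * t₁) * ((N + 1) * b * (t₁ ^ N + (κ ^ N)⁻¹) * m ^ 2) with hQ
  have hd : ∀ t ∈ Ioo 0 t₁, HasDerivAt (fun t => exp (2 * A * t) * ((t₁ - t) ^ (N + 1) * G t))
      (exp (2 * A * t) * (2 * A) * ((t₁ - t) ^ (N + 1) * G t) +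
        exp (2 * A * t) * (-((N + 1) * (t₁ - t) ^ N) * G t + (t₁ - t) ^ (N + 1) * G' t)) t := by
    intro t ht
    have h1 : HasDerivAt (fun t => exp (2 * A * t)) (exp (2 * A * t) * (2 * A)) t := by
      simpa using ((hasDerivAt_id t).const_mul (2 * A)).exp
    have h2 : HasDerivAt (fun t => (t₁ - t) ^ (N + 1)) (-((N + 1) * (t₁ - t) ^ N)) t := by
      have h3 : HasDerivAt (fun t => t₁ - t) (-1) t := by
        simpa using (hasDerivAt_id t).const_sub t₁
      refine (h3.fun_pow (N + 1)).congr_deriv ?_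
      push_cast
      simp
    exact h1.mul (h2.mul (hG t ht))
  have key := Convex.mul_sub_le_image_sub_of_le_deriv (convex_Icc (0:ℝ) t₁)
    (f := fun t => exp (2 * A * t) * ((t₁ - t) ^ (N + 1) * G t))
    (ContinuousOn.mul (by fun_prop) (ContinuousOn.mul (by fun_prop) hGc))
    (by rw [interior_Icc]; exact fun t ht => (hd t ht).differentiableAt.differentiableWithinAt)
    (C := -Q) ?_ 0 (left_mem_Icc.mpr ht₁.le) t₁ (right_mem_Icc.mpr ht₁.le) ht₁.le
  · simp only [sub_self, sub_zero, mul_zero, exp_zero, one_mul] at key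
    rw [zero_pow (by omega)] at key
    have k2 : t₁ ^ (N + 1) * G 0 ≤ Q * t₁ := by linarith
    have hp : 0 < t₁ ^ (N + 1) := by positivity
    have k3 : G 0 ≤ Q * t₁ / t₁ ^ (N + 1) := by
      rw [le_div_iff₀ hp]; linarith
    refine k3.trans (le_of_eq ?_)
    have e1 : exp (4 * A * t₁) = exp (2 * A * t₁) * exp (A * t₁) ^ 2 := by
      rw [← exp_nat_mul, ← exp_add]; congr 1; push_cast; ring
    rw [hQ, hm, e1, mul_pow, mul_pow, pow_succ]
    have : t₁ ^ N ≠ 0 := by positivity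
    have : κ ^ N ≠ 0 := by positivity
    field_simp
    ring
  · rw [interior_Icc]
    intro t ht
    rw [(hd t ht).deriv]
    have hs : 0 < t₁ - t := by linarith [ht.2]
    set s := t₁ - t with hsd
    have f1 := hfun (κ * s) (by positivity) t ht
    have f2 := hG' t ht
    have f3 : F t ^ 2 ≤ m ^ 2 :=
      pow_le_pow_left₀ (hF0 t ⟨ht.1.le, ht.2.le⟩) (hFm t ⟨ht.1.le, ht.2.le⟩) 2
    have f4 : (N + 1) * G t ≤ 2 * s * D t + (N + 1) * (b * (1 + ((κ * s) ^ N)⁻¹) * m ^ 2) := by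
      have : c * (κ * s) * D t * (N + 1) = 2 * s * D t := by
        rw [hκ]; field_simp
      have h5 : b * (1 + ((κ * s) ^ N)⁻¹) * F t ^ 2 ≤ b * (1 + ((κ * s) ^ N)⁻¹) * m ^ 2 := by
        gcongr
      have h6 : (0:ℝ) < N + 1 := by positivity
      nlinarith
    have hsN : 0 < s ^ N := by positivity
    have f5 : (N + 1) * s ^ N * G t - 2 * s ^ (N + 1) * D t
        ≤ (N + 1) * b * (s ^ N + (κ ^ N)⁻¹) * m ^ 2 := by
      have e : s ^ N * ((N + 1) * (b * (1 + ((κ * s) ^ N)⁻¹) * m ^ 2))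
          = (N + 1) * b * (s ^ N + (κ ^ N)⁻¹) * m ^ 2 := by
        rw [mul_pow]; field_simp
      have := mul_le_mul_of_nonneg_left f4 hsN.le
      rw [mul_add, e] at this
      rw [pow_succ]
      nlinarith
    have f6 : (N + 1) * b * (s ^ N + (κ ^ N)⁻¹) * m ^ 2
        ≤ (N + 1) * b * (t₁ ^ N + (κ ^ N)⁻¹) * m ^ 2 := by
      have : s ≤ t₁ := by linarith [ht.1]
      gcongr
    have f7 : s ^ (N + 1) * (2 * D t - 2 * A * G t) ≤ s ^ (N + 1) * G' t := by gcongr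
    have f8 : exp (2 * A * t) ≤ exp (2 * A * t₁) := by
      apply exp_le_exp.mpr
      have := ht.2.le
      gcongr
    set R := (N + 1) * b * (t₁ ^ N + (κ ^ N)⁻¹) * m ^ 2 with hR
    have hR0 : 0 ≤ R := by positivity
    have hep := exp_pos (2 * A * t)
    have f9 : -R ≤ 2 * A * (s ^ (N + 1) * G t) + (-((N + 1) * s ^ N) * G t + s ^ (N + 1) * G' t) := by
      nlinarith
    calc -Q ≤ exp (2 * A * t) * (-R) := by rw [hQ]; nlinarith
      _ ≤ exp (2 * A * t) * (2 * A * (s ^ (N + 1) * G t) + (-((N + 1) * s ^ N) * G t + s ^ (N + 1) * G' t)) := by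
        gcongr
      _ = _ := by ring
end ode

section time
variable {E : Type*} [NormedAddCommGroup E] [InnerProductSpace ℝ E]
  [FiniteDimensional ℝ E] [MeasurableSpace E] [BorelSpace E]

lemma aux_slice {Ω : Set E} {I : Set ℝ} {F : Type*} [TopologicalSpace F] {p : ℝ × E → F}
    (hp : ContinuousOn p (I ×ˢ Ω)) {t : ℝ} (ht : t ∈ I) :
    ContinuousOn (fun x => p (t, x)) Ω :=
  hp.comp (by fun_prop) (fun x hx => ⟨ht, hx⟩)

lemma aux_time_cont {Ω : Set E} (hΩo : IsOpen Ω) (hΩb : Bornology.IsBounded Ω) {T : ℝ}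
    {p : ℝ × E → ℝ} (hp : ContinuousOn p (Icc 0 T ×ˢ closure Ω)) :
    ContinuousOn (fun t => ∫ x in Ω, p (t, x)) (Icc 0 T) := by
  have hcomp : IsCompact (closure Ω) := hΩb.isCompact_closure
  obtain ⟨M, hM⟩ := (isCompact_Icc.prod hcomp).exists_bound_of_continuousOn hp
  apply continuousOn_of_dominated (bound := fun _ => M)
  · intro t ht
    exact ((aux_slice hp ht).mono subset_closure).aestronglyMeasurable hΩo.measurableSet
  · intro t ht
    exact (ae_restrict_iff' hΩo.measurableSet).mpr
      (Filter.Eventually.of_forall fun x hx => hM _ ⟨ht, subset_closure hx⟩)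
  · exact integrableOn_const hΩb.measure_lt_top.ne
  · exact (ae_restrict_iff' hΩo.measurableSet).mpr
      (Filter.Eventually.of_forall fun x hx =>
        hp.comp (by fun_prop) (fun t ht => ⟨ht, subset_closure hx⟩))

lemma aux_time_deriv {Ω : Set E} (hΩo : IsOpen Ω) (hΩb : Bornology.IsBounded Ω) {T : ℝ}
    {p pt : ℝ × E → ℝ} (hp : ContinuousOn p (Icc 0 T ×ˢ closure Ω))
    (hd : ∀ z ∈ Ioo 0 T ×ˢ closure Ω, HasDerivAt (fun τ => p (τ, z.2)) (pt z) z.1)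
    (hpt : ContinuousOn pt (Ioo 0 T ×ˢ closure Ω)) {t : ℝ} (ht : t ∈ Ioo 0 T) :
    HasDerivAt (fun t => ∫ x in Ω, p (t, x)) (∫ x in Ω, pt (t, x)) t := by
  have hcomp : IsCompact (closure Ω) := hΩb.isCompact_closure
  obtain ⟨ε, hε, hb⟩ := Metric.nhds_basis_closedBall.mem_iff.mp (isOpen_Ioo.mem_nhds ht)
  obtain ⟨M, hM⟩ := ((isCompact_closedBall t ε).prod hcomp).exists_bound_of_continuousOn
    (hpt.mono (prod_mono hb subset_rfl))
  refine (hasDerivAt_integral_of_dominated_loc_of_deriv_le (μ := volume.restrict Ω)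
    (F := fun t x => p (t, x)) (F' := fun t x => pt (t, x)) (bound := fun _ => M)
    (Metric.closedBall_mem_nhds t hε) ?_ ?_ ?_ ?_ ?_ ?_).2
  · filter_upwards [isOpen_Ioo.mem_nhds ht] with s hs
    exact ((aux_slice hp (Ioo_subset_Icc_self hs)).mono subset_closure).aestronglyMeasurable hΩo.measurableSet
  · exact ((aux_slice hp (Ioo_subset_Icc_self ht)).integrableOn_compact hcomp).mono_set subset_closure
  · exact ((aux_slice hpt ht).mono subset_closure).aestronglyMeasurable hΩo.measurableSet
  · exact (ae_restrict_iff' hΩo.measurableSet).mpr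
      (Filter.Eventually.of_forall fun x hx s hs => hM _ ⟨hs, subset_closure hx⟩)
  · exact integrableOn_const hΩb.measure_lt_top.ne
  · exact (ae_restrict_iff' hΩo.measurableSet).mpr
      (Filter.Eventually.of_forall fun x hx s hs => hd (s, x) ⟨hb hs, subset_closure hx⟩)

lemma aux_ae_bound {O : Set (ℝ × E)} (hO : IsOpen O) {a g q : ℝ × E → ℝ} 
    (hab : ∃ B : ℝ, ∀ p ∈ O, |a p| ≤ B) (hg : ContinuousOn g O) (hq : ContinuousOn q O)
    (hq0 : ∀ p ∈ O, 0 ≤ q p) (heq : ∀ p ∈ O, g p = a p * q p) :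
    ∀ p ∈ O, |g p| ≤ (eLpNorm a ⊤ (volume.restrict O)).toReal * q p := by
  set A := (eLpNorm a ⊤ (volume.restrict O)).toReal with hA
  obtain ⟨B, hB⟩ := hab
  have hfin : eLpNorm a ⊤ (volume.restrict O) ≠ ⊤ := by
    rw [eLpNorm_exponent_top]
    apply ne_of_lt
    refine (eLpNormEssSup_lt_top_of_ae_bound (C := B) ?_)
    exact (ae_restrict_iff' hO.measurableSet).mpr
      (Filter.Eventually.of_forall fun p hp => hB p hp)
  have hae : ∀ᵐ p ∂(volume.restrict O), |a p| ≤ A := by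
    filter_upwards [ae_le_eLpNormEssSup (f := a) (μ := volume.restrict O)] with p hp
    rw [← eLpNorm_exponent_top] at hp
    have := ENNReal.toReal_mono hfin hp
    rwa [toReal_enorm, Real.norm_eq_abs] at this
  have hae2 : ∀ᵐ p, p ∈ O → |g p| ≤ A * q p := by
    rw [ae_restrict_iff' hO.measurableSet] at hae
    filter_upwards [hae] with p hp hpO
    rw [heq p hpO, abs_mul, abs_of_nonneg (hq0 p hpO)]
    exact mul_le_mul_of_nonneg_right (hp hpO) (hq0 p hpO)
  have hop : IsOpen (O ∩ {p | 0 < |g p| - A * q p}) := by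
    have hc : ContinuousOn (fun p => |g p| - A * q p) O := hg.abs.sub (continuousOn_const.mul hq)
    exact hc.isOpen_inter_preimage hO isOpen_Ioi
  have hnull : volume (O ∩ {p | 0 < |g p| - A * q p}) = 0 := by
    rw [ae_iff] at hae2
    refine measure_mono_null ?_ hae2
    rintro p ⟨hp, hp2⟩
    simp only [mem_ofPred_eq] at hp2 ⊢
    push Not
    exact ⟨hp, by linarith⟩
  have hempty := hop.measure_eq_zero_iff volume |>.mp hnull
  intro p hp
  by_contra hcon
  push Not at hcon
  have : p ∈ O ∩ {p | 0 < |g p| - A * q p} := ⟨hp, by simp only [mem_ofPred_eq]; linarith⟩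
  rw [hempty] at this
  exact this

lemma aux_func_real [Nontrivial E] {Ω : Set E} {η : E → ℝ} (hΩo : IsOpen Ω) (hΩb : Bornology.IsBounded Ω)
    (hη : ContDiff ℝ 2 η) (hηpos : ∀ x ∈ Ω, 0 < η x) (hηbd : ∀ x ∈ frontier Ω, η x = 0)
    (hg : ∀ x ∈ frontier Ω, gradient η x ≠ 0) :
    ∃ c > (0:ℝ), ∃ b > (0:ℝ), ∀ σ > (0:ℝ), 
      ∀ u : E → ℝ, (∀ x ∈ closure Ω, 0 ≤ u x) →
      (∀ x ∈ closure Ω, DifferentiableAt ℝ u x) → ContinuousOn (fderiv ℝ u) (closure Ω) →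
      ∫ x in Ω, u x ^ 2 ≤ c * σ * (∫ x in Ω, ‖fderiv ℝ u x‖ ^ 2)
        + b * (1 + (σ ^ Module.finrank ℝ E)⁻¹) * (∫ x in Ω, u x) ^ 2 := by
  obtain ⟨c, hc, b, hb, r₀, hr₀, h⟩ := aux_func hΩo hΩb hη hηpos hηbd hg
  set n := Module.finrank ℝ E
  set σ₀ := min 1 (r₀ ^ 2) with hσ₀
  have hσ₀p : 0 < σ₀ := lt_min one_pos (by positivity)
  refine ⟨c, hc, b * (1 + (σ₀ ^ n)⁻¹), by positivity, fun σ hσ u hu0 hu hu' => ?_⟩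
  have huc : ContinuousOn u (closure Ω) := fun x hx => (hu x hx).continuousAt.continuousWithinAt
  have hcomp : IsCompact (closure Ω) := hΩb.isCompact_closure
  have toInt : ∀ {f : E → ℝ}, ContinuousOn f (closure Ω) → IntegrableOn f Ω := fun hf =>
    (hf.integrableOn_compact hcomp).mono_set subset_closure
  set μ := min σ σ₀ with hμ
  have hμp : 0 < μ := lt_min hσ hσ₀p
  set r := √μ with hr
  have hrp : 0 < r := Real.sqrt_pos.mpr hμp
  have hr2 : r ^ 2 = μ := Real.sq_sqrt hμp.le
  have hr1 : r ≤ 1 := by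
    rw [hr]
    refine Real.sqrt_le_iff.mpr ⟨zero_le_one, ?_⟩
    rw [one_pow]
    exact (min_le_right _ _).trans (min_le_left _ _)
  have hrr : r ≤ r₀ := by
    apply Real.sqrt_le_iff.mpr ⟨hr₀.le, (min_le_right _ _).trans (min_le_right _ _)⟩
  have key := h r hrp hrr u (fun x hx => hu0 x (subset_closure hx))
    (fun x hx => hu x (subset_closure hx)) (hu'.mono subset_closure)
  have nn : 0 ≤ᵐ[volume.restrict Ω] u := (ae_restrict_iff' hΩo.measurableSet).mpr
      (Filter.Eventually.of_forall fun x hx => hu0 x (subset_closure hx))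
  have i1 : IntegrableOn (fun x => u x ^ 2) Ω := toInt (huc.pow 2)
  have i2 : IntegrableOn (fun x => ‖fderiv ℝ u x‖ ^ 2) Ω := toInt (hu'.norm.pow 2)
  rw [← ofReal_integral_eq_lintegral_ofReal i1 (Filter.Eventually.of_forall fun x => sq_nonneg _),
    ← ofReal_integral_eq_lintegral_ofReal i2 (Filter.Eventually.of_forall fun x => sq_nonneg _),
    ← ofReal_integral_eq_lintegral_ofReal (toInt huc) nn] at key
  have I1 : 0 ≤ ∫ x in Ω, ‖fderiv ℝ u x‖ ^ 2 := integral_nonneg fun x => sq_nonneg _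
  have I2 : 0 ≤ ∫ x in Ω, u x := integral_nonneg_of_ae nn
  set D := ∫ x in Ω, ‖fderiv ℝ u x‖ ^ 2
  set F := ∫ x in Ω, u x
  rw [← ENNReal.ofReal_pow I2, ← ENNReal.ofReal_mul (by positivity), ← ENNReal.ofReal_mul (by positivity),
    ← ENNReal.ofReal_add (by positivity) (by positivity),
    ENNReal.ofReal_le_ofReal_iff (by positivity)] at key
  refine key.trans ?_
  rw [hr2]
  have a1 : c * μ * D ≤ c * σ * D := by
    have : μ ≤ σ := min_le_left _ _
    gcongr
  have a2 : (r ^ n)⁻¹ ≤ (μ ^ n)⁻¹ := by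
    apply inv_anti₀ (by positivity)
    rw [← hr2, ← pow_mul]
    exact pow_le_pow_of_le_one hrp.le hr1 (by omega)
  have a3 : (μ ^ n)⁻¹ ≤ (σ ^ n)⁻¹ + (σ₀ ^ n)⁻¹ := by
    have p1 : 0 < (σ ^ n)⁻¹ := by positivity
    have p2 : 0 < (σ₀ ^ n)⁻¹ := by positivity
    rcases min_choice σ σ₀ with h | h
    · rw [hμ, h]; linarith
    · rw [hμ, h]; linarith
  have a4 : b * (r ^ n)⁻¹ ≤ b * (1 + (σ₀ ^ n)⁻¹) * (1 + (σ ^ n)⁻¹) := by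
    have p1 : 0 < (σ ^ n)⁻¹ := by positivity
    have p2 : 0 < (σ₀ ^ n)⁻¹ := by positivity
    rw [mul_assoc]
    gcongr
    nlinarith [mul_pos p1 p2]
  have a5 : b * (r ^ n)⁻¹ * F ^ 2 ≤ b * (1 + (σ₀ ^ n)⁻¹) * (1 + (σ ^ n)⁻¹) * F ^ 2 := by gcongr
  linarith
end time

section main

lemma aux_const (N : ℕ) {b κ : ℝ} (hb : 0 < b) (hκ : 0 < κ) :
    ∃ C > (0:ℝ), ∀ T > (0:ℝ), ∀ A ≥ (0:ℝ), ∀ G F : ℝ, 0 ≤ F →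
      G ≤ exp (4 * A * (T / 4)) * ((N + 1) * b * (1 + ((κ * (T / 4)) ^ N)⁻¹)) * F ^ 2 →
      Real.sqrt G ≤ Real.exp (C * (1 + 1 / T + T * A + Real.sqrt A)) * F := by
  set K := (N + 1) * b * (1 + (4 / κ) ^ N * (N.factorial : ℝ)) with hK
  have hKp : 0 < K := by positivity
  refine ⟨1 + K, by positivity, fun T hT A hA G F hF h => ?_⟩
  have e1 : ((κ * (T / 4)) ^ N)⁻¹ ≤ (4 / κ) ^ N * (N.factorial : ℝ) * exp (1 / T) := by
    have h1 := Real.pow_div_factorial_le_exp (1 / T) (by positivity) N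
    rw [div_le_iff₀ (by positivity)] at h1
    have h2 : ((κ * (T / 4)) ^ N)⁻¹ = (4 / κ) ^ N * (1 / T) ^ N := by
      rw [← mul_pow, ← inv_pow]; congr 1; field_simp
    rw [h2, mul_assoc]
    gcongr
    linarith
  have e2 : (1:ℝ) ≤ exp (1 / T) := one_le_exp (by positivity)
  have e3 : (N + 1) * b * (1 + ((κ * (T / 4)) ^ N)⁻¹) ≤ K * exp (1 / T) := by
    rw [hK, mul_assoc ((N + 1) * b)]
    gcongr
    linarith
  have e4 : K ≤ exp K := by linarith [add_one_le_exp K]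
  have e5 : exp (4 * A * (T / 4)) * ((N + 1) * b * (1 + ((κ * (T / 4)) ^ N)⁻¹))
      ≤ exp ((1 + K) * (1 + 1 / T + T * A + Real.sqrt A)) ^ 2 := by
    calc exp (4 * A * (T / 4)) * ((N + 1) * b * (1 + ((κ * (T / 4)) ^ N)⁻¹))
        ≤ exp (4 * A * (T / 4)) * (exp K * exp (1 / T)) := by
          refine mul_le_mul_of_nonneg_left (e3.trans ?_) (exp_pos _).le
          gcongr
      _ = exp (T * A + K + 1 / T) := by
          rw [← exp_add, ← exp_add]; congr 1; ring
      _ ≤ exp (2 * ((1 + K) * (1 + 1 / T + T * A + Real.sqrt A))) := by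
          apply exp_le_exp.mpr
          have p1 : 0 < 1 / T := by positivity
          have p2 : 0 ≤ T * A := by positivity
          have p3 : 0 ≤ Real.sqrt A := Real.sqrt_nonneg A
          have p4 := mul_pos hKp p1
          have p5 := mul_nonneg hKp.le p2
          have p6 := mul_nonneg hKp.le p3
          nlinarith
      _ = _ := by rw [← exp_nat_mul]; push_cast; rfl
  refine Real.sqrt_le_iff.mpr ⟨by positivity, ?_⟩
  rw [mul_pow]
  refine h.trans ?_
  gcongr

lemma aux_frontier {X : Type*} [TopologicalSpace X] {Ω ω₀ : Set X} (hΩo : IsOpen Ω)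
    (h : closure ω₀ ⊆ Ω) {x : X} (hx : x ∈ frontier Ω) : x ∈ closure (Ω \ ω₀) := by
  have hxn : x ∉ Ω := by
    rw [hΩo.frontier_eq] at hx
    exact hx.2
  have hx1 : x ∈ closure Ω := frontier_subset_closure hx
  have hsub : Ω ⊆ (Ω \ ω₀) ∪ ω₀ := by
    intro y hy
    by_cases hy' : y ∈ ω₀
    · exact Or.inr hy'
    · exact Or.inl ⟨hy, hy'⟩
  have := closure_mono hsub hx1
  rw [closure_union] at this
  rcases this with h1 | h1
  · exact h1
  · exact absurd (h h1) hxn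

end main

theorem L2_L1_smoothing_estimate
    (N : ℕ) (hN : 1 ≤ N)
    (Ω : Set (EuclideanSpace ℝ (Fin N)))
    (hΩo : IsOpen Ω) (hΩb : Bornology.IsBounded Ω) (hΩc : IsConnected Ω)
    (η : EuclideanSpace ℝ (Fin N) → ℝ) (hη : ContDiff ℝ 2 η)
    (hηpos : ∀ x ∈ Ω, 0 < η x) (hηbd : ∀ x ∈ frontier Ω, η x = 0) :
    ∃ C > (0:ℝ),
      ∀ ω₀ ω : Set (EuclideanSpace ℝ (Fin N)),
      IsOpen ω₀ → ω₀.Nonempty → IsOpen ω → ω.Nonempty →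
      closure ω₀ ⊆ ω → ω ⊆ Ω →
      (∀ x ∈ closure (Ω \ ω₀), 0 < ‖gradient η x‖) →
      ∀ T : ℝ, 0 < T →
      ∀ a : ℝ × EuclideanSpace ℝ (Fin N) → ℝ, Measurable a →
      (∃ B : ℝ, ∀ p ∈ Set.Ioo (0:ℝ) T ×ˢ Ω, |a p| ≤ B) →
      ∀ q qt : ℝ × EuclideanSpace ℝ (Fin N) → ℝ,
        ContinuousOn q (Set.Icc 0 T ×ˢ closure Ω) →
        (∀ p ∈ Set.Icc 0 T ×ˢ closure Ω, 0 ≤ q p) →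
        (∀ p ∈ Set.Ioo 0 T ×ˢ closure Ω,
          HasDerivAt (fun τ => q (τ, p.2)) (qt p) p.1) →
        ContinuousOn qt (Set.Ioo 0 T ×ˢ closure Ω) →
        (∀ p ∈ Set.Ioo 0 T ×ˢ closure Ω,
          DifferentiableAt ℝ (fun z => q (p.1, z)) p.2) →
        (∀ p ∈ Set.Ioo 0 T ×ˢ closure Ω,
          DifferentiableAt ℝ (fun y => fderiv ℝ (fun z => q (p.1, z)) y) p.2) →
        ContinuousOn (fun p : ℝ × EuclideanSpace ℝ (Fin N) =>
          fderiv ℝ (fun z => q (p.1, z)) p.2) (Set.Ioo 0 T ×ˢ closure Ω) →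
        ContinuousOn (fun p : ℝ × EuclideanSpace ℝ (Fin N) =>
          fderiv ℝ (fun y => fderiv ℝ (fun z => q (p.1, z)) y) p.2)
          (Set.Ioo 0 T ×ˢ closure Ω) →
        (∀ t ∈ Set.Ioo (0:ℝ) T, ∀ x ∈ Ω,
          -qt (t, x) - spaceLaplacian (fun z => q (t, z)) x
            + a (t, x) * q (t, x) = 0) →
        (∀ t ∈ Set.Ioo (0:ℝ) T, ∀ x ∈ frontier Ω,
          ⟪gradient (fun z => q (t, z)) x, gradient η x⟫ = 0) →
        Real.sqrt (∫ x in Ω, q (0, x) ^ 2)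
          ≤ Real.exp (C * (1 + 1/T + T * (eLpNorm a ⊤ (volume.restrict (Set.Ioo (0:ℝ) T ×ˢ Ω))).toReal + Real.sqrt (eLpNorm a ⊤ (volume.restrict (Set.Ioo (0:ℝ) T ×ˢ Ω))).toReal)) *
            ∫ x in Ω, q (T/4, x) := by
  classical
  by_cases hg : ∀ x ∈ frontier Ω, gradient η x ≠ 0
  swap
  · refine ⟨1, one_pos, ?_⟩
    intro ω₀ ω _ _ _ _ h1 h2 h3
    exfalso
    apply hg
    intro x hx
    exact norm_pos_iff.mp (h3 x (aux_frontier hΩo (h1.trans h2) hx))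
  haveI : Nonempty (Fin N) := ⟨⟨0, hN⟩⟩
  haveI : Nontrivial (EuclideanSpace ℝ (Fin N)) := by
    apply Module.nontrivial_of_finrank_pos (R := ℝ)
    rw [finrank_euclideanSpace_fin]; omega
  have hΩn : Ωᶜ.Nonempty := by
    rw [Set.nonempty_compl]
    intro hu
    rw [hu] at hΩb
    exact NormedSpace.unbounded_univ ℝ (EuclideanSpace ℝ (Fin N)) hΩb
  obtain ⟨c, hc, b, hb, hfun⟩ := aux_func_real hΩo hΩb hη hηpos hηbd hg
  rw [finrank_euclideanSpace_fin] at hfun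
  obtain ⟨C, hC, hCC⟩ := aux_const N (b := b) (κ := 2 / (c * (N + 1))) hb (by positivity)
  refine ⟨C, hC, ?_⟩
  intro ω₀ ω _ _ _ _ _ _ _ T hT a ha hab q qt hq hq0 hqt hqtc hd1 hd2 hc1 hc2 heq hneu
  have hcomp : IsCompact (closure Ω) := hΩb.isCompact_closure
  have toInt : ∀ {f : EuclideanSpace ℝ (Fin N) → ℝ}, ContinuousOn f (closure Ω) →
    IntegrableOn f Ω := fun hf => (hf.integrableOn_compact hcomp).mono_set subset_closure
  have hOc : Ioo 0 T ×ˢ closure Ω ⊆ Icc 0 T ×ˢ closure Ω :=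
    prod_mono Ioo_subset_Icc_self subset_rfl
  have hO : Ioo 0 T ×ˢ Ω ⊆ Ioo 0 T ×ˢ closure Ω := prod_mono subset_rfl subset_closure
  have hlapc : ContinuousOn (fun p : ℝ × EuclideanSpace ℝ (Fin N) =>
      spaceLaplacian (fun z => q (p.1, z)) p.2) (Ioo 0 T ×ˢ closure Ω) := by
    have h1 : ContinuousOn (fun p : ℝ × EuclideanSpace ℝ (Fin N) =>
        ∑ i : Fin N, fderiv ℝ (fun y => fderiv ℝ (fun z => q (p.1, z)) y) p.2
          (EuclideanSpace.single i 1) (EuclideanSpace.single i 1)) (Ioo 0 T ×ˢ closure Ω) := by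
      apply continuousOn_finset_sum
      intro i _
      exact (hc2.clm_apply continuousOn_const).clm_apply continuousOn_const
    refine h1.congr ?_
    intro p hp
    exact aux_lap_eq (hd2 p hp)
  set A := (eLpNorm a ⊤ (volume.restrict (Set.Ioo (0:ℝ) T ×ˢ Ω))).toReal with hA
  have hA0 : 0 ≤ A := ENNReal.toReal_nonneg
  have hbd : ∀ p ∈ Ioo 0 T ×ˢ Ω, |qt p + spaceLaplacian (fun z => q (p.1, z)) p.2| ≤ A * q p := by
    refine aux_ae_bound (isOpen_Ioo.prod hΩo) hab
      (g := fun p => qt p + spaceLaplacian (fun z => q (p.1, z)) p.2)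
      ((hqtc.add hlapc).mono hO)
      (hq.mono (hO.trans hOc)) (fun p hp => hq0 p (hOc (hO hp))) ?_
    rintro ⟨t, x⟩ ⟨ht, hx⟩
    have := heq t ht x hx
    simp only
    linarith
  have hF0 : ∀ t ∈ Icc 0 T, 0 ≤ ∫ x in Ω, q (t, x) := fun t ht =>
    setIntegral_nonneg hΩo.measurableSet fun x hx => hq0 _ ⟨ht, subset_closure hx⟩
  have hsubc : Icc 0 (T / 4) ⊆ Icc 0 T := Icc_subset_Icc_right (by linarith)
  have hsubo : Ioo 0 (T / 4) ⊆ Ioo 0 T := Ioo_subset_Ioo_right (by linarith)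
  have hq2 : ContinuousOn (fun p => q p ^ 2) (Icc 0 T ×ˢ closure Ω) := hq.pow 2
  have hG2d : ∀ z ∈ Ioo 0 T ×ˢ closure Ω,
      HasDerivAt (fun τ => q (τ, z.2) ^ 2) (2 * q z * qt z) z.1 := by
    intro z hz
    refine ((hqt z hz).fun_pow 2).congr_deriv ?_
    simp
  have hG2c : ContinuousOn (fun z => 2 * q z * qt z) (Ioo 0 T ×ˢ closure Ω) :=
    (continuousOn_const.mul (hq.mono hOc)).mul hqtc
  have main := aux_ode (N := N) (t₁ := T / 4) (A := A) (c := c) (b := b)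
    (F := fun t => ∫ x in Ω, q (t, x)) (F' := fun t => ∫ x in Ω, qt (t, x))
    (G := fun t => ∫ x in Ω, q (t, x) ^ 2) (G' := fun t => ∫ x in Ω, 2 * q (t, x) * qt (t, x))
    (D := fun t => ∫ x in Ω, ‖fderiv ℝ (fun z => q (t, z)) x‖ ^ 2)
    (by positivity) hA0 hc hb (fun t ht => hF0 t (hsubc ht))
    ((aux_time_cont hΩo hΩb hq).mono hsubc) ((aux_time_cont hΩo hΩb hq2).mono hsubc)
    (fun t ht => aux_time_deriv hΩo hΩb hq hqt hqtc (hsubo ht))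
    (fun t ht => aux_time_deriv hΩo hΩb hq2 hG2d hG2c (hsubo ht)) ?_ ?_ ?_
  · exact hCC T hT A hA0 _ _ (hF0 _ ⟨by linarith, by linarith⟩) main
  · intro t ht'
    have ht := hsubo ht'
    have cq : ContinuousOn (fun x => q (t, x)) (closure Ω) := aux_slice (hq.mono hOc) ht
    have cqt : ContinuousOn (fun x => qt (t, x)) (closure Ω) := aux_slice hqtc ht
    have cl : ContinuousOn (fun x => spaceLaplacian (fun z => q (t, z)) x) (closure Ω) :=
      aux_slice hlapc ht
    have h1 := aux_ibp hΩo hΩb hη hηpos hηbd hg hΩn (f := fun z => q (t, z))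
      (fun x hx => hd2 (t, x) ⟨ht, hx⟩) (aux_slice hc2 ht) (hneu t ht)
      (w := fun _ => 1) (w' := fun _ => 0) (fun x _ => hasFDerivAt_const _ _)
      continuousOn_const continuousOn_const
    simp only [one_mul, ContinuousLinearMap.zero_apply, mul_zero, Finset.sum_const_zero,
      add_zero] at h1
    have h2 : ∫ x in Ω, -(A * q (t, x)) ≤
        ∫ x in Ω, (qt (t, x) + spaceLaplacian (fun z => q (t, z)) x) := by
      refine setIntegral_mono_on (toInt (continuousOn_const.mul cq).neg) (toInt (cqt.add cl))
        hΩo.measurableSet ?_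
      intro x hx
      exact (abs_le.mp (hbd (t, x) ⟨ht, hx⟩)).1
    rw [integral_add (toInt cqt) (toInt cl), h1, integral_neg, integral_const_mul, add_zero] at h2
    exact h2
  · intro t ht'
    have ht := hsubo ht'
    have cq : ContinuousOn (fun x => q (t, x)) (closure Ω) := aux_slice (hq.mono hOc) ht
    have cqt : ContinuousOn (fun x => qt (t, x)) (closure Ω) := aux_slice hqtc ht
    have cl : ContinuousOn (fun x => spaceLaplacian (fun z => q (t, z)) x) (closure Ω) :=
      aux_slice hlapc ht
    have cd : ContinuousOn (fun x => fderiv ℝ (fun z => q (t, z)) x) (closure Ω) :=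
      aux_slice hc1 ht
    have cd2 : ContinuousOn (fun x => ‖fderiv ℝ (fun z => q (t, z)) x‖ ^ 2) (closure Ω) :=
      cd.norm.pow 2
    have h1 := aux_ibp hΩo hΩb hη hηpos hηbd hg hΩn (f := fun z => q (t, z))
      (fun x hx => hd2 (t, x) ⟨ht, hx⟩) (aux_slice hc2 ht) (hneu t ht)
      (w := fun z => q (t, z)) (w' := fun x => fderiv ℝ (fun z => q (t, z)) x)
      (fun x hx => (hd1 (t, x) ⟨ht, subset_closure hx⟩).hasFDerivAt)
      cq cd
    simp only [← aux_norm_fderiv] at h1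
    have cql : ContinuousOn (fun x => q (t, x) * spaceLaplacian (fun z => q (t, z)) x)
      (closure Ω) := cq.mul cl
    rw [integral_add (toInt cql) (toInt cd2)] at h1
    have cqq : ContinuousOn (fun x => q (t, x) ^ 2) (closure Ω) := cq.pow 2
    have cqqt : ContinuousOn (fun x => 2 * q (t, x) * qt (t, x)) (closure Ω) :=
      (continuousOn_const.mul cq).mul cqt
    have h2 : ∫ x in Ω, -(2 * A * q (t, x) ^ 2) ≤
        ∫ x in Ω, (2 * q (t, x) * qt (t, x)
          + 2 * (q (t, x) * spaceLaplacian (fun z => q (t, z)) x)) := by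
      refine setIntegral_mono_on (toInt (continuousOn_const.mul cqq).neg)
        (toInt (cqqt.add (continuousOn_const.mul cql))) hΩo.measurableSet ?_
      intro x hx
      have h3 := (abs_le.mp (hbd (t, x) ⟨ht, hx⟩)).1
      have h4 := hq0 (t, x) (hOc ⟨ht, subset_closure hx⟩)
      simp only at h3
      nlinarith
    have cql2 : ContinuousOn (fun x => 2 * (q (t, x) * spaceLaplacian (fun z => q (t, z)) x))
      (closure Ω) := continuousOn_const.mul cql
    rw [integral_add (toInt cqqt) (toInt cql2), integral_neg,
      integral_const_mul, integral_const_mul] at h2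
    linarith
  · intro σ hσ t ht'
    have ht := hsubo ht'
    exact hfun σ hσ (fun z => q (t, z)) (fun x hx => hq0 _ (hOc ⟨ht, hx⟩))
      (fun x hx => hd1 (t, x) ⟨ht, hx⟩) (aux_slice hc1 ht)
end
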